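/- arXiv:2105.08029 — 3 statements merged into one kernel-verified Lean document; each statement's English description precedes it below -/
import Mathlib

section
/- Let 1 < p < ∞ and α > 1, and consider the radial weights ω ≡ 1 and ν(s) = (1−s²)^{−1} (log(e/(1−s²)))^{−α}. Then ν ∉ Ď, M_p(ω,ν) < ∞, and A_p(ω,ν) = ∞. -/
open MeasureTheory Set Metric
open scoped ENNReal NNReal

noncomputable section

/-- `ω̂(r) = ∫_r^1 ω(s) ds`. -/
def hatw (w : ℝ → ℝ) (r : ℝ) : ℝ := ∫ s in Set.Ioo r 1, w s

/-- `ω̂₁(r) = ∫_r^1 s ω(s) ds`. -/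
def hat1 (w : ℝ → ℝ) (r : ℝ) : ℝ := ∫ s in Set.Ioo r 1, s * w s

/-- A radial weight: nonnegative, integrable on `[0,1)`, with `ω̂(r) > 0` for `0 ≤ r < 1`. -/
def IsRadialWeight (w : ℝ → ℝ) : Prop :=
  (∀ r ∈ Set.Ico (0:ℝ) 1, 0 ≤ w r) ∧ MeasureTheory.IntegrableOn w (Set.Ico (0:ℝ) 1) ∧
    ∀ r ∈ Set.Ico (0:ℝ) 1, 0 < hatw w r

/-- The class `Ď`: there are `K > 1` and `C > 1` with `ω̂(r) ≥ C ω̂(1-(1-r)/K)`. -/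
def Dcheck (w : ℝ → ℝ) : Prop :=
  ∃ K > (1:ℝ), ∃ C > (1:ℝ), ∀ r ∈ Set.Ico (0:ℝ) 1, C * hatw w (1 - (1 - r) / K) ≤ hatw w r

/-- `σ(s) = (ω(s)/ν(s)^{1/p})^{p'}`, as an extended nonnegative real (so `σ(s) = ∞`
when `ν(s) = 0 < ω(s)`). -/
def sigmaE (p : ℝ) (w v : ℝ → ℝ) (s : ℝ) : ℝ≥0∞ :=
  (ENNReal.ofReal (w s) / ENNReal.ofReal (v s) ^ (1 / p)) ^ (p / (p - 1))

/-- The Muckenhoupt-type quantity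
`A_p(ω,ν) = sup_{0 ≤ r < 1} ν̂₁(r)^{1/p} σ̂₁(r)^{1/p'} / ω̂₁(r)` (note `1/p' = 1 - 1/p`). -/
def ApE (p : ℝ) (w v : ℝ → ℝ) : ℝ≥0∞ :=
  ⨆ r ∈ Set.Ico (0:ℝ) 1,
    (∫⁻ s in Set.Ioo r 1, ENNReal.ofReal (s * v s)) ^ (1 / p) *
      (∫⁻ s in Set.Ioo r 1, ENNReal.ofReal s * sigmaE p w v s) ^ (1 - 1 / p) /
      ENNReal.ofReal (hat1 w r)

/-- The quantity `M_p(ω,ν) = sup_{0<r<1} (∫₀^r s ν(s)/ω̂₁(s)^p ds + 1)^{1/p} σ̂₁(r)^{1/p'}`. -/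
def MpE (p : ℝ) (w v : ℝ → ℝ) : ℝ≥0∞ :=
  ⨆ r ∈ Set.Ioo (0:ℝ) 1,
    ((∫⁻ s in Set.Ioo 0 r, ENNReal.ofReal (s * v s) / ENNReal.ofReal (hat1 w s) ^ p) + 1) ^ (1 / p) *
      (∫⁻ s in Set.Ioo r 1, ENNReal.ofReal s * sigmaE p w v s) ^ (1 - 1 / p)

/-!
For `ω ≡ 1` one has `ω̂₁(r) = (1 - r²) / 2`, and both conditions compare `ν` with powers of `1 - r²`.
If `ν` is almost increasing, pulling `ν(r)` out of both integrals in `M_p` leaves powers of `1 - r²`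
and of `ν(r)` which cancel exactly. If `h(s) = (1 - s²) ν(s)` decreases, then
`σ̂₁(r) ≳ h(r)^{-1/(p-1)} (1 - r²)^{p'}`, so that `A_p` dominates `(ν̂₁(r) / h(r))^{1/p}`.

For the logarithmic weight put `L(s) = log (e / (1 - s²))`. Since `L' = 2s / (1 - s²)`, we get
`ν̂₁ = L^{1-α} / (2 (α - 1))`, while `h = L^{-α}`; hence `ν̂₁ / h = L / (2 (α - 1))` is unbounded.
As `L` changes only by a bounded amount when `1 - r` is divided by `K`, the tail `ν̂ ~ ν̂₁` is
slowly varying at `1`, which excludes the geometric decay required by `Ď`.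
-/

open Filter Topology Asymptotics

section FundamentalTheorem

variable {a b : ℝ} {G g : ℝ → ℝ}

lemma integrableOn_Ioo_of_hasDerivAt_of_nonneg (hG : ContinuousOn G (Icc a b))
    (hderiv : ∀ x ∈ Ioo a b, HasDerivAt G (g x) x) (hg : ∀ x ∈ Ioo a b, 0 ≤ g x) :
    IntegrableOn g (Ioo a b) :=
  (intervalIntegral.integrableOn_deriv_of_nonneg hG hderiv hg).mono_set Ioo_subset_Ioc_self

lemma setIntegral_Ioo_of_hasDerivAt_of_nonneg (hab : a ≤ b) (hG : ContinuousOn G (Icc a b))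
    (hderiv : ∀ x ∈ Ioo a b, HasDerivAt G (g x) x) (hg : ∀ x ∈ Ioo a b, 0 ≤ g x) :
    ∫ x in Ioo a b, g x = G b - G a := by
  rw [← integral_Ioc_eq_integral_Ioo, ← intervalIntegral.integral_of_le hab]
  refine intervalIntegral.integral_eq_sub_of_hasDerivAt_of_le hab hG hderiv ?_
  rw [intervalIntegrable_iff_integrableOn_Ioc_of_le hab]
  exact intervalIntegral.integrableOn_deriv_of_nonneg hG hderiv hg

lemma setLIntegral_Ioo_of_hasDerivAt_of_nonneg (hab : a ≤ b) (hG : ContinuousOn G (Icc a b))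
    (hderiv : ∀ x ∈ Ioo a b, HasDerivAt G (g x) x) (hg : ∀ x ∈ Ioo a b, 0 ≤ g x) :
    ∫⁻ x in Ioo a b, ENNReal.ofReal (g x) = ENNReal.ofReal (G b - G a) := by
  rw [← setIntegral_Ioo_of_hasDerivAt_of_nonneg hab hG hderiv hg,
    ofReal_integral_eq_lintegral_ofReal
      (integrableOn_Ioo_of_hasDerivAt_of_nonneg hG hderiv hg)]
  filter_upwards [ae_restrict_mem measurableSet_Ioo] with x hx using hg x hx

end FundamentalTheorem

section PowersOfOneSubSq

variable {q r s : ℝ}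

lemma one_sub_sq_pos (hs : s ∈ Ico (0 : ℝ) 1) : 0 < 1 - s ^ 2 := by
  nlinarith [hs.1, hs.2]

lemma one_sub_sq_le_one_sub_sq (hr : 0 ≤ r) (hrs : r ≤ s) : 1 - s ^ 2 ≤ 1 - r ^ 2 := by
  gcongr

lemma hasDerivAt_one_sub_sq (s : ℝ) : HasDerivAt (fun s : ℝ => 1 - s ^ 2) (-(2 * s)) s := by
  simpa using (hasDerivAt_pow 2 s).const_sub 1

lemma hasDerivAt_neg_one_sub_sq_rpow_div (hq : q ≠ 0) (hs : s ∈ Ico (0 : ℝ) 1) :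
    HasDerivAt (fun s : ℝ => -((1 - s ^ 2) ^ q / (2 * q))) (s * (1 - s ^ 2) ^ (q - 1)) s := by
  refine ((((hasDerivAt_one_sub_sq s).rpow_const (p := q)
    (Or.inl (one_sub_sq_pos hs).ne')).div_const (2 * q)).fun_neg).congr_deriv ?_
  field_simp

lemma mul_one_sub_sq_rpow_nonneg (q : ℝ) (hs : s ∈ Ico (0 : ℝ) 1) :
    0 ≤ s * (1 - s ^ 2) ^ q :=
  mul_nonneg hs.1 (Real.rpow_nonneg (one_sub_sq_pos hs).le q)

lemma lintegral_Ioo_one_mul_one_sub_sq_rpow (hq : 0 < q) (hr : r ∈ Ico (0 : ℝ) 1) :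
    ∫⁻ s in Ioo r 1, ENNReal.ofReal (s * (1 - s ^ 2) ^ (q - 1))
      = ENNReal.ofReal ((1 - r ^ 2) ^ q / (2 * q)) := by
  have hIoo : ∀ s ∈ Ioo r 1, s ∈ Ico (0 : ℝ) 1 := fun s hs => ⟨hr.1.trans hs.1.le, hs.2⟩
  have hcont : Continuous fun s : ℝ => (1 - s ^ 2) ^ q :=
    Continuous.rpow_const (by fun_prop) fun _ => Or.inr hq.le
  rw [setLIntegral_Ioo_of_hasDerivAt_of_nonneg hr.2.le
    (G := fun s : ℝ => -((1 - s ^ 2) ^ q / (2 * q))) (hcont.div_const _).neg.continuousOn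
    (fun s hs => hasDerivAt_neg_one_sub_sq_rpow_div hq.ne' (hIoo s hs))
    (fun s hs => mul_one_sub_sq_rpow_nonneg _ (hIoo s hs))]
  simp [Real.zero_rpow hq.ne']

lemma lintegral_Ioo_zero_mul_one_sub_sq_rpow_le (hq : q < 0) (hr : r ∈ Ico (0 : ℝ) 1) :
    ∫⁻ s in Ioo 0 r, ENNReal.ofReal (s * (1 - s ^ 2) ^ (q - 1))
      ≤ ENNReal.ofReal ((1 - r ^ 2) ^ q / (2 * -q)) := by
  have hIcc : ∀ s ∈ Icc 0 r, s ∈ Ico (0 : ℝ) 1 := fun s hs => ⟨hs.1, hs.2.trans_lt hr.2⟩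
  rw [setLIntegral_Ioo_of_hasDerivAt_of_nonneg hr.1
    (G := fun s : ℝ => -((1 - s ^ 2) ^ q / (2 * q)))
    (fun s hs =>
      (hasDerivAt_neg_one_sub_sq_rpow_div hq.ne (hIcc s hs)).continuousAt.continuousWithinAt)
    (fun s hs => hasDerivAt_neg_one_sub_sq_rpow_div hq.ne (hIcc s (Ioo_subset_Icc_self hs)))
    (fun s hs => mul_one_sub_sq_rpow_nonneg _ (hIcc s (Ioo_subset_Icc_self hs)))]
  refine ENNReal.ofReal_le_ofReal ?_
  have hzero : (1 - (0 : ℝ) ^ 2) ^ q / (2 * q) ≤ 0 :=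
    div_nonpos_of_nonneg_of_nonpos (Real.rpow_nonneg (by norm_num) q) (by linarith)
  rw [mul_neg, div_neg]
  linarith

lemma hat1_one (hr : r ≤ 1) : hat1 (fun _ => 1) r = (1 - r ^ 2) / 2 := by
  rw [hat1, ← integral_Ioc_eq_integral_Ioo, ← intervalIntegral.integral_of_le hr]
  simp

end PowersOfOneSubSq

section RadialWeight

variable {r : ℝ} {v : ℝ → ℝ}

lemma IsRadialWeight.integrableOn_Ioo (hv : IsRadialWeight v) (hr : 0 ≤ r) :
    IntegrableOn v (Ioo r 1) :=
  hv.2.1.mono_set fun _ hs => ⟨hr.trans hs.1.le, hs.2⟩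

lemma IsRadialWeight.nonneg_of_mem_Ioo (hv : IsRadialWeight v) (hr : 0 ≤ r) {s : ℝ}
    (hs : s ∈ Ioo r 1) : 0 ≤ v s :=
  hv.1 s ⟨hr.trans hs.1.le, hs.2⟩

lemma IsRadialWeight.integrableOn_Ioo_mul (hv : IsRadialWeight v) (hr : 0 ≤ r) :
    IntegrableOn (fun s => s * v s) (Ioo r 1) := by
  refine (hv.integrableOn_Ioo hr).bdd_mul (c := 1) (by fun_prop) ?_
  filter_upwards [ae_restrict_mem measurableSet_Ioo] with s hs
  rw [Real.norm_of_nonneg (hr.trans hs.1.le)]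
  exact hs.2.le

lemma IsRadialWeight.ofReal_hat1 (hv : IsRadialWeight v) (hr : 0 ≤ r) :
    ENNReal.ofReal (hat1 v r) = ∫⁻ s in Ioo r 1, ENNReal.ofReal (s * v s) := by
  refine ofReal_integral_eq_lintegral_ofReal (hv.integrableOn_Ioo_mul hr) ?_
  filter_upwards [ae_restrict_mem measurableSet_Ioo] with s hs
  exact mul_nonneg (hr.trans hs.1.le) (hv.nonneg_of_mem_Ioo hr hs)

lemma IsRadialWeight.hat1_le_hatw (hv : IsRadialWeight v) (hr : 0 ≤ r) :
    hat1 v r ≤ hatw v r :=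
  setIntegral_mono_on (hv.integrableOn_Ioo_mul hr) (hv.integrableOn_Ioo hr) measurableSet_Ioo
    fun _ hs => mul_le_of_le_one_left (hv.nonneg_of_mem_Ioo hr hs) hs.2.le

lemma IsRadialWeight.mul_hatw_le_hat1 (hv : IsRadialWeight v) (hr : 0 ≤ r) :
    r * hatw v r ≤ hat1 v r := by
  rw [hatw, ← integral_const_mul]
  exact setIntegral_mono_on ((hv.integrableOn_Ioo hr).const_mul r) (hv.integrableOn_Ioo_mul hr)
    measurableSet_Ioo
    fun _ hs => mul_le_mul_of_nonneg_right hs.1.le (hv.nonneg_of_mem_Ioo hr hs)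

lemma IsRadialWeight.hat1_isEquivalent_hatw (hv : IsRadialWeight v) :
    hat1 v ~[𝓝[<] 1] hatw v := by
  have hIco : ∀ᶠ r in 𝓝[<] (1 : ℝ), r ∈ Ico (0 : ℝ) 1 := Ico_mem_nhdsLT zero_lt_one
  rw [isEquivalent_iff_tendsto_one (hIco.mono fun r hr => (hv.2.2 r hr).ne')]
  refine tendsto_of_tendsto_of_tendsto_of_le_of_le' (tendsto_id.mono_left nhdsWithin_le_nhds)
    tendsto_const_nhds ?_ ?_
  · filter_upwards [hIco] with r hr
    exact (le_div_iff₀ (hv.2.2 r hr)).2 (hv.mul_hatw_le_hat1 hr.1)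
  · filter_upwards [hIco] with r hr
    exact (div_le_one (hv.2.2 r hr)).2 (hv.hat1_le_hatw hr.1)

end RadialWeight

section SlowVariation

variable {K : ℝ} {f g v : ℝ → ℝ}

/-- Slow variation at the boundary point `1`: dividing the distance `1 - r` by a constant does not
change `f` asymptotically. -/
def IsSlowlyVaryingAtOne (f : ℝ → ℝ) : Prop :=
  ∀ K > 1, (fun r => f (1 - (1 - r) / K)) ~[𝓝[<] 1] f

lemma tendsto_one_sub_div_nhdsLT_one (hK : 0 < K) :
    Tendsto (fun r : ℝ => 1 - (1 - r) / K) (𝓝[<] 1) (𝓝[<] 1) := by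
  refine tendsto_nhdsWithin_iff.2 ⟨?_, ?_⟩
  · have hcont : Continuous fun r : ℝ => 1 - (1 - r) / K := by fun_prop
    simpa using (hcont.tendsto 1).mono_left nhdsWithin_le_nhds
  · filter_upwards [self_mem_nhdsWithin] with r hr
    exact sub_lt_self 1 (div_pos (sub_pos.2 hr) hK)

lemma IsSlowlyVaryingAtOne.of_isEquivalent (hf : IsSlowlyVaryingAtOne f)
    (hgf : g ~[𝓝[<] 1] f) : IsSlowlyVaryingAtOne g := fun K hK =>
  ((hgf.comp_tendsto (tendsto_one_sub_div_nhdsLT_one (zero_lt_one.trans hK))).trans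
    (hf K hK)).trans hgf.symm

lemma IsSlowlyVaryingAtOne.div_const (hf : IsSlowlyVaryingAtOne f) (c : ℝ) :
    IsSlowlyVaryingAtOne fun r => f r / c := fun K hK =>
  (hf K hK).div (IsEquivalent.refl (u := fun _ => c))

lemma IsSlowlyVaryingAtOne.rpow_const (hf : IsSlowlyVaryingAtOne f)
    (hf0 : ∀ᶠ r in 𝓝[<] 1, 0 ≤ f r) (β : ℝ) : IsSlowlyVaryingAtOne fun r => f r ^ β := by
  have habs : f =ᶠ[𝓝[<] 1] fun r => |f r| := hf0.mono fun r hr => (abs_of_nonneg hr).symm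
  have hslow : IsSlowlyVaryingAtOne fun r => |f r| := hf.of_isEquivalent habs.symm.isEquivalent
  have hslow_rpow : IsSlowlyVaryingAtOne fun r => |f r| ^ β := fun K hK =>
    (hslow K hK).rpow fun _ => abs_nonneg _
  exact hslow_rpow.of_isEquivalent (habs.fun_comp (· ^ β)).isEquivalent

theorem IsRadialWeight.not_dcheck_of_isSlowlyVaryingAtOne (hv : IsRadialWeight v)
    (hslow : IsSlowlyVaryingAtOne (hatw v)) : ¬ Dcheck v := by
  rintro ⟨K, hK, C, hC, hD⟩
  have hIco : ∀ᶠ r in 𝓝[<] (1 : ℝ), r ∈ Ico (0 : ℝ) 1 := Ico_mem_nhdsLT zero_lt_one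
  have hratio : Tendsto (fun r => C * (hatw v (1 - (1 - r) / K) / hatw v r)) (𝓝[<] 1)
      (𝓝 (C * 1)) :=
    ((isEquivalent_iff_tendsto_one (hIco.mono fun r hr => (hv.2.2 r hr).ne')).1
      (hslow K hK)).const_mul C
  have hle : C * 1 ≤ 1 := le_of_tendsto hratio <| by
    filter_upwards [hIco] with r hr
    rw [← mul_div_assoc]
    exact (div_le_one (hv.2.2 r hr)).2 (hD r hr)
  linarith

end SlowVariation

section ConstantNumerator

variable {p C r s : ℝ} {v : ℝ → ℝ}

/-- The extended-real tail `σ̂₁(r) = ∫_r^1 s σ(s) ds` appearing in `A_p` and `M_p`. -/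
def sigmaHat1 (p : ℝ) (w v : ℝ → ℝ) (r : ℝ) : ℝ≥0∞ :=
  ∫⁻ s in Ioo r 1, ENNReal.ofReal s * sigmaE p w v s

/-- `v` is increasing on `[0,1)` up to the multiplicative constant `C`. -/
def AlmostIncreasing (C : ℝ) (v : ℝ → ℝ) : Prop :=
  ∀ ⦃r s : ℝ⦄, 0 ≤ r → r ≤ s → s < 1 → v r ≤ C * v s

lemma AlmostIncreasing.const_pos (hC : AlmostIncreasing C v) (hr : r ∈ Ico (0 : ℝ) 1)
    (hvr : 0 < v r) : 0 < C :=
  pos_of_mul_pos_left (hvr.trans_le (hC hr.1 le_rfl hr.2)) hvr.le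

lemma sigmaE_one (hp : 1 < p) (hv : 0 < v s) :
    sigmaE p (fun _ => 1) v s = ENNReal.ofReal (v s ^ (1 - p)⁻¹) := by
  have hp1 : 0 < p - 1 := sub_pos.2 hp
  have hp1' : 1 - p ≠ 0 := by linarith
  rw [sigmaE, ENNReal.ofReal_rpow_of_pos hv, ← ENNReal.ofReal_div_of_pos (by positivity),
    ENNReal.ofReal_rpow_of_pos (by positivity), one_div (v s ^ (1 / p)), ← Real.rpow_neg hv.le,
    ← Real.rpow_mul hv.le]
  congr 2
  field_simp
  ring

lemma sigmaHat1_one_le_of_almostIncreasing (hp : 1 < p) (hC : AlmostIncreasing C v)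
    (hr : r ∈ Ico (0 : ℝ) 1) (hvr : 0 < v r) :
    sigmaHat1 p (fun _ => 1) v r
      ≤ ENNReal.ofReal (1 / 2 * ((v r / C) ^ (1 - p)⁻¹ * (1 - r ^ 2))) := by
  have hC0 : 0 < C := hC.const_pos hr hvr
  have hvC : 0 < v r / C := div_pos hvr hC0
  have hσ : ∀ s ∈ Ioo r 1, ENNReal.ofReal s * sigmaE p (fun _ => 1) v s ≤
      ENNReal.ofReal ((v r / C) ^ (1 - p)⁻¹) * ENNReal.ofReal (s * (1 - s ^ 2) ^ (1 - 1 : ℝ)) := by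
    intro s hs
    have hvs : v r / C ≤ v s := (div_le_iff₀' hC0).2 (hC hr.1 hs.1.le hs.2)
    have hexp : (1 - p)⁻¹ ≤ 0 := inv_nonpos.2 (by linarith)
    rw [sigmaE_one hp (hvC.trans_le hvs), mul_comm, sub_self, Real.rpow_zero, mul_one]
    exact mul_le_mul_left
      (ENNReal.ofReal_le_ofReal (Real.rpow_le_rpow_of_nonpos hvC hvs hexp)) _
  refine (setLIntegral_mono' measurableSet_Ioo hσ).trans_eq ?_
  rw [lintegral_const_mul' _ _ ENNReal.ofReal_ne_top,
    lintegral_Ioo_one_mul_one_sub_sq_rpow one_pos hr, ← ENNReal.ofReal_mul (by positivity),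
    Real.rpow_one]
  congr 1
  ring

lemma lintegral_div_hat1_one_rpow_le_of_almostIncreasing (hp : 1 < p)
    (hC : AlmostIncreasing C v) (hr : r ∈ Ico (0 : ℝ) 1) (hvr : 0 < v r) :
    ∫⁻ s in Ioo 0 r, ENNReal.ofReal (s * v s) / ENNReal.ofReal (hat1 (fun _ => 1) s) ^ p
      ≤ ENNReal.ofReal (C * 2 ^ p / (2 * (p - 1)) * (v r * (1 - r ^ 2) ^ (1 - p))) := by
  have hC0 : 0 < C := hC.const_pos hr hvr
  have hintegrand : ∀ s ∈ Ioo 0 r,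
      ENNReal.ofReal (s * v s) / ENNReal.ofReal (hat1 (fun _ => 1) s) ^ p ≤
        ENNReal.ofReal (C * 2 ^ p * v r) *
          ENNReal.ofReal (s * (1 - s ^ 2) ^ ((1 - p) - 1)) := by
    intro s hs
    have hs1 : s < 1 := hs.2.trans hr.2
    have hs0 : 0 < s := hs.1
    have hu : 0 < 1 - s ^ 2 := one_sub_sq_pos ⟨hs0.le, hs1⟩
    rw [hat1_one hs1.le, ENNReal.ofReal_rpow_of_pos (by positivity),
      ← ENNReal.ofReal_div_of_pos (by positivity), ← ENNReal.ofReal_mul (by positivity)]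
    refine ENNReal.ofReal_le_ofReal ?_
    calc s * v s / ((1 - s ^ 2) / 2) ^ p ≤ s * (C * v r) / ((1 - s ^ 2) / 2) ^ p := by
          gcongr
          exact hC hs0.le hs.2.le hr.2
      _ = C * 2 ^ p * v r * (s * (1 - s ^ 2) ^ ((1 - p) - 1)) := by
          rw [show (1 - p) - 1 = -p by ring, Real.rpow_neg hu.le,
            Real.div_rpow hu.le zero_le_two]
          field_simp
  refine (setLIntegral_mono' measurableSet_Ioo hintegrand).trans ?_
  rw [lintegral_const_mul' _ _ ENNReal.ofReal_ne_top]
  refine (mul_le_mul_right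
    (lintegral_Ioo_zero_mul_one_sub_sq_rpow_le (by linarith) hr) _).trans_eq ?_
  rw [← ENNReal.ofReal_mul (by positivity)]
  congr 1
  rw [neg_sub]
  ring

lemma one_le_mul_one_sub_sq_rpow_of_almostIncreasing (hp : 1 < p)
    (hC : AlmostIncreasing C v) (hr : r ∈ Ico (0 : ℝ) 1) (hv0 : 0 < v 0) :
    1 ≤ C / v 0 * (v r * (1 - r ^ 2) ^ (1 - p)) := by
  have hratio : 1 ≤ C * v r / v 0 := (one_le_div hv0).2 (hC le_rfl hr.1 hr.2)
  have hpow : 1 ≤ (1 - r ^ 2) ^ (1 - p) :=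
    Real.one_le_rpow_of_pos_of_le_one_of_nonpos (one_sub_sq_pos hr) (by nlinarith [sq_nonneg r])
      (by linarith)
  calc 1 ≤ C * v r / v 0 * (1 - r ^ 2) ^ (1 - p) := one_le_mul_of_one_le_of_one_le hratio hpow
    _ = C / v 0 * (v r * (1 - r ^ 2) ^ (1 - p)) := by ring

lemma lintegral_div_hat1_one_rpow_add_one_le_of_almostIncreasing (hp : 1 < p)
    (hC : AlmostIncreasing C v) (hr : r ∈ Ico (0 : ℝ) 1) (hv0 : 0 < v 0) (hvr : 0 < v r) :
    (∫⁻ s in Ioo 0 r, ENNReal.ofReal (s * v s) / ENNReal.ofReal (hat1 (fun _ => 1) s) ^ p) + 1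
      ≤ ENNReal.ofReal ((C * 2 ^ p / (2 * (p - 1)) + C / v 0) *
        (v r * (1 - r ^ 2) ^ (1 - p))) := by
  have hp1 : 0 < p - 1 := sub_pos.2 hp
  have hC0 : 0 < C := hC.const_pos hr hvr
  have hu : 0 < 1 - r ^ 2 := one_sub_sq_pos hr
  rw [add_mul, ENNReal.ofReal_add (by positivity) (by positivity)]
  exact add_le_add (lintegral_div_hat1_one_rpow_le_of_almostIncreasing hp hC hr hvr)
    (ENNReal.one_le_ofReal.2 (one_le_mul_one_sub_sq_rpow_of_almostIncreasing hp hC hr hv0))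

lemma rpow_mul_rpow_conj_cancel (hp : 1 < p) {x u : ℝ} (hx : 0 < x) (hu : 0 < u) :
    (x * u ^ (1 - p)) ^ (1 / p) * (x ^ (1 - p)⁻¹ * u) ^ (1 - 1 / p) = 1 := by
  have hp1 : 1 - p ≠ 0 := by linarith
  have hx1 : x ^ (1 / p) * x ^ ((1 - p)⁻¹ * (1 - 1 / p)) = 1 := by
    rw [← Real.rpow_add hx, show 1 / p + (1 - p)⁻¹ * (1 - 1 / p) = 0 by field_simp; ring,
      Real.rpow_zero]
  have hu1 : u ^ ((1 - p) * (1 / p)) * u ^ (1 - 1 / p) = 1 := by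
    rw [← Real.rpow_add hu, show (1 - p) * (1 / p) + (1 - 1 / p) = 0 by field_simp; ring,
      Real.rpow_zero]
  rw [Real.mul_rpow hx.le (by positivity), Real.mul_rpow (by positivity) hu.le,
    ← Real.rpow_mul hu.le, ← Real.rpow_mul hx.le, mul_mul_mul_comm, hx1, hu1, one_mul]

theorem MpE_one_lt_top_of_almostIncreasing (hp : 1 < p) (hv : ∀ s ∈ Ico (0 : ℝ) 1, 0 < v s)
    (hC : AlmostIncreasing C v) : MpE p (fun _ => 1) v < ⊤ := by
  have hp1 : 0 < p - 1 := sub_pos.2 hp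
  have hp' : 0 < 1 - 1 / p := by rw [sub_pos, div_lt_one] <;> linarith
  have hzero : (0 : ℝ) ∈ Ico (0 : ℝ) 1 := ⟨le_rfl, zero_lt_one⟩
  have hv0 : 0 < v 0 := hv 0 hzero
  have hC0 : 0 < C := hC.const_pos hzero hv0
  set A := C * 2 ^ p / (2 * (p - 1)) + C / v 0
  have hA : 0 < A := by positivity
  suffices h : MpE p (fun _ => 1) v ≤
      ENNReal.ofReal ((A * C) ^ (1 / p) * (1 / 2) ^ (1 - 1 / p)) from
    h.trans_lt ENNReal.ofReal_lt_top
  refine iSup₂_le fun r hr => ?_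
  have hr' : r ∈ Ico (0 : ℝ) 1 := Ioo_subset_Ico_self hr
  have hu : 0 < 1 - r ^ 2 := one_sub_sq_pos hr'
  have hvr : 0 < v r := hv r hr'
  calc _ ≤ ENNReal.ofReal (A * (v r * (1 - r ^ 2) ^ (1 - p))) ^ (1 / p) *
        ENNReal.ofReal (1 / 2 * ((v r / C) ^ (1 - p)⁻¹ * (1 - r ^ 2))) ^ (1 - 1 / p) := by
        gcongr
        · exact lintegral_div_hat1_one_rpow_add_one_le_of_almostIncreasing hp hC hr' hv0 hvr
        · exact sigmaHat1_one_le_of_almostIncreasing hp hC hr' hvr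
    _ = ENNReal.ofReal ((A * C) ^ (1 / p) * (1 / 2) ^ (1 - 1 / p)) := by
        rw [show A * (v r * (1 - r ^ 2) ^ (1 - p)) = A * C * (v r / C * (1 - r ^ 2) ^ (1 - p)) by
            field_simp,
          ENNReal.ofReal_rpow_of_pos (by positivity), ENNReal.ofReal_rpow_of_pos (by positivity),
          ← ENNReal.ofReal_mul (by positivity), Real.mul_rpow (x := A * C) (by positivity)
          (by positivity), Real.mul_rpow (x := 1 / 2) (by positivity) (by positivity),
          mul_mul_mul_comm, rpow_mul_rpow_conj_cancel hp (by positivity) hu, mul_one]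

lemma le_sigmaHat1_one_of_antitoneOn (hp : 1 < p) (hv : ∀ s ∈ Ico (0 : ℝ) 1, 0 < v s)
    (hanti : AntitoneOn (fun s => (1 - s ^ 2) * v s) (Ico 0 1)) (hr : r ∈ Ico (0 : ℝ) 1) :
    ENNReal.ofReal (((1 - r ^ 2) * v r) ^ (1 - p)⁻¹ *
      ((1 - r ^ 2) ^ (p / (p - 1)) / (2 * (p / (p - 1))))) ≤ sigmaHat1 p (fun _ => 1) v r := by
  have hp1 : 0 < p - 1 := sub_pos.2 hp
  have hq : p / (p - 1) - 1 = -(1 - p)⁻¹ := by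
    rw [← neg_sub p 1, inv_neg, neg_neg]
    field_simp
    ring
  have hh : 0 < (1 - r ^ 2) * v r := mul_pos (one_sub_sq_pos hr) (hv r hr)
  rw [ENNReal.ofReal_mul (by positivity),
    ← lintegral_Ioo_one_mul_one_sub_sq_rpow (by positivity) hr,
    ← lintegral_const_mul' _ _ ENNReal.ofReal_ne_top, hq]
  refine setLIntegral_mono' measurableSet_Ioo fun s hs => ?_
  have hs' : s ∈ Ico (0 : ℝ) 1 := ⟨hr.1.trans hs.1.le, hs.2⟩
  have hu : 0 < 1 - s ^ 2 := one_sub_sq_pos hs'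
  have hvs : 0 < v s := hv s hs'
  rw [sigmaE_one hp hvs, ← ENNReal.ofReal_mul (by positivity), ← ENNReal.ofReal_mul hs'.1]
  refine ENNReal.ofReal_le_ofReal ?_
  calc ((1 - r ^ 2) * v r) ^ (1 - p)⁻¹ * (s * (1 - s ^ 2) ^ (-(1 - p)⁻¹))
      ≤ ((1 - s ^ 2) * v s) ^ (1 - p)⁻¹ * (s * (1 - s ^ 2) ^ (-(1 - p)⁻¹)) := by
        refine mul_le_mul_of_nonneg_right ?_ (mul_one_sub_sq_rpow_nonneg _ hs')
        exact Real.rpow_le_rpow_of_nonpos (mul_pos hu hvs) (hanti hr hs' hs.1.le)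
          (inv_nonpos.2 (by linarith))
    _ = s * v s ^ (1 - p)⁻¹ := by
        rw [Real.mul_rpow hu.le hvs.le, Real.rpow_neg hu.le]
        field_simp

lemma rpow_mul_rpow_conj_div (hp : 1 < p) {N h u c : ℝ} (hN : 0 ≤ N) (hh : 0 < h) (hu : 0 < u)
    (hc : 0 < c) : N ^ (1 / p) * (h ^ (1 - p)⁻¹ * (u ^ (p / (p - 1)) / c)) ^ (1 - 1 / p) / (u / 2)
      = 2 * c ^ (1 / p - 1) * (N / h) ^ (1 / p) := by
  have hp1 : p - 1 ≠ 0 := by linarith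
  have hp1' : 1 - p ≠ 0 := by linarith
  have hhpow : (h ^ (1 - p)⁻¹) ^ (1 - 1 / p) = (h ^ (1 / p))⁻¹ := by
    rw [← Real.rpow_mul hh.le, ← Real.rpow_neg hh.le]
    congr 1
    field_simp
    ring
  have hupow : (u ^ (p / (p - 1))) ^ (1 - 1 / p) = u := by
    rw [← Real.rpow_mul hu.le, show p / (p - 1) * (1 - 1 / p) = 1 by field_simp, Real.rpow_one]
  have hcpow : c ^ (1 / p - 1) = (c ^ (1 - 1 / p))⁻¹ := by rw [← Real.rpow_neg hc.le, neg_sub]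
  rw [Real.mul_rpow (by positivity) (by positivity), Real.div_rpow (by positivity) hc.le,
    Real.div_rpow hN hh.le, hhpow, hupow, hcpow]
  field_simp

lemma le_ApE_one_of_antitoneOn (hp : 1 < p) (hv : IsRadialWeight v)
    (hpos : ∀ s ∈ Ico (0 : ℝ) 1, 0 < v s)
    (hanti : AntitoneOn (fun s => (1 - s ^ 2) * v s) (Ico 0 1)) (hr : r ∈ Ico (0 : ℝ) 1) :
    ENNReal.ofReal (2 * (2 * (p / (p - 1))) ^ (1 / p - 1) *
      (hat1 v r / ((1 - r ^ 2) * v r)) ^ (1 / p)) ≤ ApE p (fun _ => 1) v := by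
  have hc : 0 < 2 * (p / (p - 1)) := mul_pos two_pos (div_pos (by linarith) (sub_pos.2 hp))
  have hp' : 0 < 1 - 1 / p := by rw [sub_pos, div_lt_one] <;> linarith
  have hu : 0 < 1 - r ^ 2 := one_sub_sq_pos hr
  have hh : 0 < (1 - r ^ 2) * v r := mul_pos hu (hpos r hr)
  have hN : 0 ≤ hat1 v r := (mul_nonneg hr.1 (hv.2.2 r hr).le).trans (hv.mul_hatw_le_hat1 hr.1)
  calc _ = ENNReal.ofReal (hat1 v r) ^ (1 / p) *
        ENNReal.ofReal (((1 - r ^ 2) * v r) ^ (1 - p)⁻¹ *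
          ((1 - r ^ 2) ^ (p / (p - 1)) / (2 * (p / (p - 1))))) ^ (1 - 1 / p) /
        ENNReal.ofReal (hat1 (fun _ => 1) r) := by
        rw [hat1_one hr.2.le, ENNReal.ofReal_rpow_of_nonneg hN (by positivity),
          ENNReal.ofReal_rpow_of_pos (by positivity), ← ENNReal.ofReal_mul (by positivity),
          ← ENNReal.ofReal_div_of_pos (by positivity),
          rpow_mul_rpow_conj_div hp hN hh hu hc]
    _ ≤ (∫⁻ s in Ioo r 1, ENNReal.ofReal (s * v s)) ^ (1 / p) *
        sigmaHat1 p (fun _ => 1) v r ^ (1 - 1 / p) / ENNReal.ofReal (hat1 (fun _ => 1) r) := by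
        rw [hv.ofReal_hat1 hr.1]
        gcongr
        exact le_sigmaHat1_one_of_antitoneOn hp hpos hanti hr
    _ ≤ ApE p (fun _ => 1) v := by
        unfold ApE
        exact le_iSup₂_of_le r hr le_rfl

theorem ApE_one_eq_top_of_antitoneOn (hp : 1 < p) (hv : IsRadialWeight v)
    (hpos : ∀ s ∈ Ico (0 : ℝ) 1, 0 < v s)
    (hanti : AntitoneOn (fun s => (1 - s ^ 2) * v s) (Ico 0 1))
    (htop : Tendsto (fun r => hat1 v r / ((1 - r ^ 2) * v r)) (𝓝[<] 1) atTop) :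
    ApE p (fun _ => 1) v = ⊤ := by
  have hc : 0 < 2 * (p / (p - 1)) := mul_pos two_pos (div_pos (by linarith) (sub_pos.2 hp))
  have hlower : Tendsto (fun r => ENNReal.ofReal (2 * (2 * (p / (p - 1))) ^ (1 / p - 1) *
      (hat1 v r / ((1 - r ^ 2) * v r)) ^ (1 / p))) (𝓝[<] 1) (𝓝 ⊤) :=
    ENNReal.tendsto_ofReal_nhds_top.2 <|
      ((tendsto_rpow_atTop (by positivity)).comp htop).const_mul_atTop
        (mul_pos two_pos (Real.rpow_pos_of_pos hc _))
  refine top_le_iff.1 (le_of_tendsto hlower ?_)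
  filter_upwards [Ico_mem_nhdsLT zero_lt_one] with r hr
  exact le_ApE_one_of_antitoneOn hp hv hpos hanti hr

end ConstantNumerator

section LogarithmicWeight

variable {α r s : ℝ}

/-- The logarithmic factor `L(s) = log (e / (1 - s²))` of the weight. -/
def logFactor (s : ℝ) : ℝ := Real.log (Real.exp 1 / (1 - s ^ 2))

/-- The weight `ν(s) = (1 - s²)⁻¹ L(s)^{-α}` of the example. -/
def logWeight (α s : ℝ) : ℝ := (1 - s ^ 2)⁻¹ * logFactor s ^ (-α)

lemma logFactor_eq_one_sub_log (hs : s ∈ Ico (0 : ℝ) 1) :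
    logFactor s = 1 - Real.log (1 - s ^ 2) := by
  rw [logFactor, Real.log_div (Real.exp_pos 1).ne' (one_sub_sq_pos hs).ne', Real.log_exp]

lemma logFactor_monotoneOn : MonotoneOn logFactor (Ico 0 1) := by
  intro r hr s hs hrs
  rw [logFactor_eq_one_sub_log hr, logFactor_eq_one_sub_log hs]
  exact sub_le_sub_left
    (Real.log_le_log (one_sub_sq_pos hs) (one_sub_sq_le_one_sub_sq hr.1 hrs)) 1

lemma one_le_logFactor (hs : s ∈ Ico (0 : ℝ) 1) : 1 ≤ logFactor s := by
  simpa [logFactor] using logFactor_monotoneOn ⟨le_rfl, zero_lt_one⟩ hs hs.1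

lemma logFactor_pos (hs : s ∈ Ico (0 : ℝ) 1) : 0 < logFactor s :=
  zero_lt_one.trans_le (one_le_logFactor hs)

lemma hasDerivAt_logFactor (hs : s ∈ Ico (0 : ℝ) 1) :
    HasDerivAt logFactor (2 * s / (1 - s ^ 2)) s := by
  have hu : 0 < 1 - s ^ 2 := one_sub_sq_pos hs
  refine (((hasDerivAt_one_sub_sq s).fun_inv hu.ne').const_mul (Real.exp 1)).log
    (by positivity) |>.congr_deriv ?_
  field_simp

lemma tendsto_logFactor_atTop : Tendsto logFactor (𝓝[<] 1) atTop := by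
  have hzero : Tendsto (fun s : ℝ => 1 - s ^ 2) (𝓝[<] 1) (𝓝 0) := by
    simpa using ((hasDerivAt_one_sub_sq 1).continuousAt.tendsto.mono_left nhdsWithin_le_nhds)
  have hpos : ∀ᶠ s in 𝓝[<] (1 : ℝ), 0 < 1 - s ^ 2 := by
    filter_upwards [Ico_mem_nhdsLT zero_lt_one] with s hs using one_sub_sq_pos hs
  exact Real.tendsto_log_atTop.comp <|
    (tendsto_nhdsWithin_iff.2 ⟨hzero, hpos⟩).inv_tendsto_nhdsGT_zero.const_mul_atTop
      (Real.exp_pos 1)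

lemma logFactor_sub_logFactor (hr : r ∈ Ico (0 : ℝ) 1) (hs : s ∈ Ico (0 : ℝ) 1) :
    logFactor s - logFactor r = Real.log ((1 - r ^ 2) / (1 - s ^ 2)) := by
  rw [logFactor_eq_one_sub_log hr, logFactor_eq_one_sub_log hs,
    Real.log_div (one_sub_sq_pos hr).ne' (one_sub_sq_pos hs).ne']
  ring

lemma isSlowlyVaryingAtOne_logFactor : IsSlowlyVaryingAtOne logFactor := by
  intro K hK
  have hK0 : 0 < K := zero_lt_one.trans hK
  set φ : ℝ → ℝ := fun r => 1 - (1 - r) / K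
  have hcont : ContinuousAt (fun r : ℝ => Real.log (K * (1 + r) / (1 + φ r))) 1 := by
    have hφ : 1 + φ 1 ≠ 0 := by norm_num [φ]
    have harg : K * (1 + 1) / (1 + φ 1) ≠ 0 := div_ne_zero (by positivity) hφ
    exact ContinuousAt.log (ContinuousAt.div (by fun_prop) (by fun_prop) hφ) harg
  have hdiff : (fun r => Real.log (K * (1 + r) / (1 + φ r))) =ᶠ[𝓝[<] 1]
      (fun r => logFactor (φ r)) - logFactor := by
    filter_upwards [Ico_mem_nhdsLT zero_lt_one,
      (tendsto_one_sub_div_nhdsLT_one hK0).eventually (Ico_mem_nhdsLT zero_lt_one)]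
      with r hr hφr
    have hφ1 : 0 < 1 - φ r := sub_pos.2 hφr.2
    have hφ2 : 0 < 1 + φ r := add_pos_of_pos_of_nonneg one_pos hφr.1
    have hstep : 1 - r = K * (1 - φ r) := by simp only [φ]; field_simp; ring
    rw [Pi.sub_apply, logFactor_sub_logFactor hr hφr,
      show 1 - r ^ 2 = (1 - r) * (1 + r) by ring,
      show 1 - φ r ^ 2 = (1 - φ r) * (1 + φ r) by ring, hstep]
    congr 1
    field_simp
  refine IsLittleO.isEquivalent (IsBigO.trans_isLittleO (g := fun _ => (1 : ℝ)) ?_ ?_)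
  · exact hdiff.symm.isBigO.trans
      ((hcont.tendsto.mono_left nhdsWithin_le_nhds).isBigO_one ℝ)
  · exact isLittleO_const_left.2 (Or.inr (tendsto_norm_atTop_atTop.comp tendsto_logFactor_atTop))

lemma logWeight_pos (α : ℝ) (hs : s ∈ Ico (0 : ℝ) 1) : 0 < logWeight α s :=
  mul_pos (inv_pos.2 (one_sub_sq_pos hs)) (Real.rpow_pos_of_pos (logFactor_pos hs) _)

lemma one_sub_sq_mul_logWeight (α : ℝ) (hs : s ∈ Ico (0 : ℝ) 1) :
    (1 - s ^ 2) * logWeight α s = logFactor s ^ (-α) :=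
  mul_inv_cancel_left₀ (one_sub_sq_pos hs).ne' _

lemma antitoneOn_one_sub_sq_mul_logWeight (hα : 0 ≤ α) :
    AntitoneOn (fun s => (1 - s ^ 2) * logWeight α s) (Ico 0 1) := by
  intro r hr s hs hrs
  simp only [one_sub_sq_mul_logWeight α hr, one_sub_sq_mul_logWeight α hs]
  exact Real.rpow_le_rpow_of_nonpos (logFactor_pos hr) (logFactor_monotoneOn hr hs hrs)
    (neg_nonpos.2 hα)

lemma one_add_log_le_mul_rpow {x : ℝ} (hx : 0 < x) (hα : 1 ≤ α) :
    1 + Real.log x ≤ α * x ^ (1 / α) := by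
  have hα0 : 0 < α := zero_lt_one.trans_le hα
  have hlog : 1 / α * Real.log x ≤ x ^ (1 / α) - 1 := by
    rw [← Real.log_rpow hx]
    exact Real.log_le_sub_one_of_pos (Real.rpow_pos_of_pos hx _)
  calc 1 + Real.log x ≤ α + α * (1 / α * Real.log x) := by
        rw [← mul_assoc, mul_one_div_cancel hα0.ne', one_mul]
        gcongr
    _ ≤ α + α * (x ^ (1 / α) - 1) := by gcongr
    _ = α * x ^ (1 / α) := by ring

lemma logFactor_le_mul_logFactor (hα : 1 ≤ α) (hr : r ∈ Ico (0 : ℝ) 1)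
    (hs : s ∈ Ico (0 : ℝ) 1) (hrs : r ≤ s) :
    logFactor s ≤ α * ((1 - r ^ 2) / (1 - s ^ 2)) ^ (1 / α) * logFactor r := by
  have hlog : 0 ≤ Real.log ((1 - r ^ 2) / (1 - s ^ 2)) := by
    rw [← logFactor_sub_logFactor hr hs]
    exact sub_nonneg.2 (logFactor_monotoneOn hr hs hrs)
  calc logFactor s = logFactor r + Real.log ((1 - r ^ 2) / (1 - s ^ 2)) := by
        rw [← logFactor_sub_logFactor hr hs, add_sub_cancel]
    _ ≤ (1 + Real.log ((1 - r ^ 2) / (1 - s ^ 2))) * logFactor r := by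
        rw [one_add_mul]
        gcongr
        exact le_mul_of_one_le_right hlog (one_le_logFactor hr)
    _ ≤ _ := mul_le_mul_of_nonneg_right
        (one_add_log_le_mul_rpow (div_pos (one_sub_sq_pos hr) (one_sub_sq_pos hs)) hα)
        (logFactor_pos hr).le

lemma almostIncreasing_logWeight (hα : 1 ≤ α) : AlmostIncreasing (α ^ α) (logWeight α) := by
  intro r s hr0 hrs hs1
  have hr : r ∈ Ico (0 : ℝ) 1 := ⟨hr0, hrs.trans_lt hs1⟩
  have hs : s ∈ Ico (0 : ℝ) 1 := ⟨hr0.trans hrs, hs1⟩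
  have hα0 : 0 < α := zero_lt_one.trans_le hα
  have hur : 0 < 1 - r ^ 2 := one_sub_sq_pos hr
  have hus : 0 < 1 - s ^ 2 := one_sub_sq_pos hs
  have hLr : 0 < logFactor r := logFactor_pos hr
  have hLs : 0 < logFactor s := logFactor_pos hs
  have hpow : logFactor s ^ α ≤ α ^ α * ((1 - r ^ 2) / (1 - s ^ 2)) * logFactor r ^ α := by
    refine (Real.rpow_le_rpow hLs.le
      (logFactor_le_mul_logFactor hα hr hs hrs) hα0.le).trans_eq ?_
    rw [Real.mul_rpow (by positivity) hLr.le, Real.mul_rpow hα0.le (by positivity),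
      ← Real.rpow_mul (by positivity), one_div_mul_cancel hα0.ne', Real.rpow_one]
  rw [logWeight, logWeight, Real.rpow_neg hLr.le, Real.rpow_neg hLs.le, ← mul_inv, ← mul_inv,
    ← div_eq_mul_inv, inv_le_comm₀ (by positivity) (by positivity), inv_div,
    div_le_iff₀ (by positivity)]
  calc (1 - s ^ 2) * logFactor s ^ α
      ≤ (1 - s ^ 2) * (α ^ α * ((1 - r ^ 2) / (1 - s ^ 2)) * logFactor r ^ α) := by gcongr
    _ = (1 - r ^ 2) * logFactor r ^ α * α ^ α := by field_simp

lemma hasDerivAt_neg_logFactor_rpow_div (hα : α ≠ 1) (hs : s ∈ Ico (0 : ℝ) 1) :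
    HasDerivAt (fun s => -(logFactor s ^ (1 - α) / (2 * (α - 1)))) (s * logWeight α s) s := by
  have hα' : α - 1 ≠ 0 := sub_ne_zero.2 hα
  refine ((((hasDerivAt_logFactor hs).rpow_const (p := 1 - α)
    (Or.inl (logFactor_pos hs).ne')).div_const (2 * (α - 1))).fun_neg).congr_deriv ?_
  have hu : 1 - s ^ 2 ≠ 0 := (one_sub_sq_pos hs).ne'
  rw [logWeight, show 1 - α - 1 = -α by ring]
  field_simp
  ring

lemma mul_logWeight_nonneg (α : ℝ) (hs : s ∈ Ico (0 : ℝ) 1) : 0 ≤ s * logWeight α s :=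
  mul_nonneg hs.1 (logWeight_pos α hs).le

-- The junk values `e / 0 = 0`, `log 0 = 0` and `0 ^ (1 - α) = 0` agree with the limit at `1`.
lemma logFactor_one_rpow (hα : α ≠ 1) : logFactor 1 ^ (1 - α) = 0 := by
  simp [logFactor, Real.zero_rpow (sub_ne_zero.2 hα.symm)]

lemma continuousOn_neg_logFactor_rpow_div (hα : 1 < α) :
    ContinuousOn (fun s => -(logFactor s ^ (1 - α) / (2 * (α - 1)))) (Icc 0 1) := by
  intro s hs
  rcases hs.2.lt_or_eq with hs1 | rfl
  · exact (hasDerivAt_neg_logFactor_rpow_div hα.ne'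
      ⟨hs.1, hs1⟩).continuousAt.continuousWithinAt
  · rw [continuousWithinAt_Icc_iff_Iic zero_lt_one, ← continuousWithinAt_Iio_iff_Iic]
    have hlim : Tendsto (fun s => logFactor s ^ (1 - α)) (𝓝[<] 1) (𝓝 0) := by
      simpa [Function.comp_def] using
        (tendsto_rpow_neg_atTop (sub_pos.2 hα)).comp tendsto_logFactor_atTop
    rw [← logFactor_one_rpow hα.ne'] at hlim
    exact (hlim.div_const _).neg

lemma hat1_logWeight (hα : 1 < α) (hr : r ∈ Ico (0 : ℝ) 1) :
    hat1 (logWeight α) r = logFactor r ^ (1 - α) / (2 * (α - 1)) := by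
  have hIoo : ∀ s ∈ Ioo r 1, s ∈ Ico (0 : ℝ) 1 := fun s hs => ⟨hr.1.trans hs.1.le, hs.2⟩
  rw [hat1, setIntegral_Ioo_of_hasDerivAt_of_nonneg hr.2.le
    ((continuousOn_neg_logFactor_rpow_div hα).mono (Icc_subset_Icc_left hr.1))
    (fun s hs => hasDerivAt_neg_logFactor_rpow_div hα.ne' (hIoo s hs))
    (fun s hs => mul_logWeight_nonneg α (hIoo s hs)), logFactor_one_rpow hα.ne']
  ring

lemma integrableOn_logWeight (hα : 1 < α) : IntegrableOn (logWeight α) (Ico 0 1) := by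
  rw [integrableOn_Ico_iff_integrableOn_Ioo]
  have hmul : IntegrableOn (fun s => s * logWeight α s) (Ioo 0 1) :=
    integrableOn_Ioo_of_hasDerivAt_of_nonneg (continuousOn_neg_logFactor_rpow_div hα)
      (fun s hs => hasDerivAt_neg_logFactor_rpow_div hα.ne' (Ioo_subset_Ico_self hs))
      (fun s hs => mul_logWeight_nonneg α (Ioo_subset_Ico_self hs))
  have hmeas : Measurable (logWeight α) := by unfold logWeight logFactor; fun_prop
  have hone : IntegrableOn (fun _ => (1 : ℝ)) (Ioo (0 : ℝ) 1) := by simp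
  refine (hmul.add hone).mono' hmeas.aestronglyMeasurable ?_
  filter_upwards [ae_restrict_mem measurableSet_Ioo] with s hs
  have hs' : s ∈ Ico (0 : ℝ) 1 := Ioo_subset_Ico_self hs
  have hle : (1 - s ^ 2) * logWeight α s ≤ 1 := by
    rw [one_sub_sq_mul_logWeight α hs']
    exact Real.rpow_le_one_of_one_le_of_nonpos (one_le_logFactor hs') (by linarith)
  rw [Real.norm_of_nonneg (logWeight_pos α hs').le, Pi.add_apply]
  calc logWeight α s = s * logWeight α s + (1 - s) * logWeight α s := by ring
    _ ≤ s * logWeight α s + (1 - s ^ 2) * logWeight α s := by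
        gcongr
        · exact (logWeight_pos α hs').le
        · nlinarith [hs.1, hs.2]
    _ ≤ s * logWeight α s + 1 := by gcongr

lemma isRadialWeight_logWeight (hα : 1 < α) : IsRadialWeight (logWeight α) := by
  refine ⟨fun s hs => (logWeight_pos α hs).le, integrableOn_logWeight hα, fun r hr => ?_⟩
  have hint : IntegrableOn (logWeight α) (Ioo r 1) :=
    (integrableOn_logWeight hα).mono_set fun s hs => ⟨hr.1.trans hs.1.le, hs.2⟩
  rw [hatw, ← integral_Ioc_eq_integral_Ioo, ← intervalIntegral.integral_of_le hr.2.le]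
  exact intervalIntegral.intervalIntegral_pos_of_pos_on
    ((intervalIntegrable_iff_integrableOn_Ioo_of_le hr.2.le).2 hint)
    (fun s hs => logWeight_pos α ⟨hr.1.trans hs.1.le, hs.2⟩) hr.2

lemma isSlowlyVaryingAtOne_hatw_logWeight (hα : 1 < α) :
    IsSlowlyVaryingAtOne (hatw (logWeight α)) := by
  have hIco : ∀ᶠ r in 𝓝[<] (1 : ℝ), r ∈ Ico (0 : ℝ) 1 := Ico_mem_nhdsLT zero_lt_one
  have hmodel : IsSlowlyVaryingAtOne fun r => logFactor r ^ (1 - α) / (2 * (α - 1)) :=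
    (isSlowlyVaryingAtOne_logFactor.rpow_const
      (hIco.mono fun r hr => (logFactor_pos hr).le) (1 - α)).div_const _
  have hhat1 : hat1 (logWeight α) =ᶠ[𝓝[<] 1] fun r => logFactor r ^ (1 - α) / (2 * (α - 1)) :=
    hIco.mono fun r hr => hat1_logWeight hα hr
  exact hmodel.of_isEquivalent
    ((isRadialWeight_logWeight hα).hat1_isEquivalent_hatw.symm.trans hhat1.isEquivalent)

lemma tendsto_hat1_logWeight_div_atTop (hα : 1 < α) :
    Tendsto (fun r => hat1 (logWeight α) r / ((1 - r ^ 2) * logWeight α r)) (𝓝[<] 1) atTop := by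
  have hα' : 0 < 2 * (α - 1) := by linarith
  refine (tendsto_logFactor_atTop.atTop_div_const hα').congr' ?_
  filter_upwards [Ico_mem_nhdsLT zero_lt_one] with r hr
  have hL : 0 < logFactor r := logFactor_pos hr
  rw [hat1_logWeight hα hr, one_sub_sq_mul_logWeight α hr, sub_eq_add_neg 1 α,
    Real.rpow_add hL, Real.rpow_one]
  field_simp

end LogarithmicWeight

/-- Let `1 < p < ∞` and `α > 1`, and consider `ω ≡ 1` and
`ν(s) = (1-s²)⁻¹ (log(e/(1-s²)))^{-α}`. Then `ν ∉ Ď`, `M_p(ω,ν) < ∞` and `A_p(ω,ν) = ∞`. -/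
theorem log_weight_example (p α : ℝ) (hp : 1 < p) (hα : 1 < α) :
    ¬ Dcheck (fun s => (1 - s ^ 2)⁻¹ * Real.log (Real.exp 1 / (1 - s ^ 2)) ^ (-α)) ∧
    MpE p (fun _ => (1:ℝ))
      (fun s => (1 - s ^ 2)⁻¹ * Real.log (Real.exp 1 / (1 - s ^ 2)) ^ (-α)) < ⊤ ∧
    ApE p (fun _ => (1:ℝ))
      (fun s => (1 - s ^ 2)⁻¹ * Real.log (Real.exp 1 / (1 - s ^ 2)) ^ (-α)) = ⊤ := by
  have hν : IsRadialWeight (logWeight α) := isRadialWeight_logWeight hα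
  have hpos : ∀ s ∈ Ico (0 : ℝ) 1, 0 < logWeight α s := fun _ hs => logWeight_pos α hs
  exact ⟨hν.not_dcheck_of_isSlowlyVaryingAtOne (isSlowlyVaryingAtOne_hatw_logWeight hα),
    MpE_one_lt_top_of_almostIncreasing hp hpos (almostIncreasing_logWeight hα.le),
    ApE_one_eq_top_of_antitoneOn hp hν hpos
      (antitoneOn_one_sub_sq_mul_logWeight (zero_le_one.trans hα.le))
      (tendsto_hat1_logWeight_div_atTop hα)⟩

end
end

section
/- Let 1 < p < ∞ and let ω and ν be any pair of radial weights. If A_p(ω,ν) < ∞, then M_p(ω,ν) < ∞. -/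
open MeasureTheory Set Metric
open scoped ENNReal NNReal

noncomputable section

/-!
Write `W`, `V`, `S` for the tail integrals of three densities with `f ^ p ≤ g * h ^ (p - 1)`,
and assume `V * S ^ (p - 1) ≤ K * W ^ p`. If `W t = 2 * W r`, then Hölder's inequality on `(t, r]`
gives `W r ^ p ≤ V t * (∫_(t,r] h) ^ (p - 1)`, so the assumption at `t` forces `(t, r]` to carry a
fixed proportion of `S t`: whenever `W` halves, `S ^ (p - 1)` drops by a factor `κ < 1`. On the
same interval `∫ g / W ^ p` is at most `2 ^ p * K / S r ^ (p - 1)`. Thus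
`(∫_(a,r] g / W ^ p) * S r ^ (p - 1)` obeys the recursion `x ↦ κ * x + 2 ^ p * K` at successive
halvings of `W`, and stays below its fixed point. The theorem is the case of the densities `s ω`,
`s ν` and `s σ` on `(0, 1)`.
-/

section Tail

variable {f g h : ℝ → ℝ≥0∞} {μ : Measure ℝ} {p : ℝ} {K : ℝ≥0∞} {a b r t : ℝ}

/-- The tail integral `t ↦ ∫_{(t, ∞)} f dμ`. For an integral over `(t, b)`, take `μ` to be
restricted to a set bounded by `b`. -/
def lintegralIoi (μ : Measure ℝ) (f : ℝ → ℝ≥0∞) (t : ℝ) : ℝ≥0∞ := ∫⁻ s in Ioi t, f s ∂μ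

lemma antitone_lintegralIoi (μ : Measure ℝ) (f : ℝ → ℝ≥0∞) : Antitone (lintegralIoi μ f) :=
  fun _ _ hst ↦ lintegral_mono_set (Ioi_subset_Ioi hst)

lemma setLIntegral_Ioc_le_lintegralIoi (μ : Measure ℝ) (f : ℝ → ℝ≥0∞) (t r : ℝ) :
    ∫⁻ s in Ioc t r, f s ∂μ ≤ lintegralIoi μ f t :=
  lintegral_mono_set Ioc_subset_Ioi_self

lemma setLIntegral_Ioc_add_lintegralIoi (f : ℝ → ℝ≥0∞) (htr : t ≤ r) :
    ∫⁻ s in Ioc t r, f s ∂μ + lintegralIoi μ f r = lintegralIoi μ f t := by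
  rw [lintegralIoi, lintegralIoi, ← Ioc_union_Ioi_eq_Ioi htr,
    lintegral_union measurableSet_Ioi (Ioc_disjoint_Ioi le_rfl)]

lemma lintegralIoi_restrict_Ioo (f : ℝ → ℝ≥0∞) (hat : a ≤ t) :
    lintegralIoi (volume.restrict (Ioo a b)) f t = ∫⁻ s in Ioo t b, f s := by
  rw [lintegralIoi, Measure.restrict_restrict measurableSet_Ioi, Ioi_inter_Ioo, max_eq_left hat]

lemma continuousOn_lintegralIoi [NullSingletonClass μ] (hf : AEMeasurable f μ)
    (hfa : lintegralIoi μ f a ≠ ∞) : ContinuousOn (lintegralIoi μ f) (Ici a) := by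
  have hfin := ae_lt_top' hf.restrict hfa
  have hint : IntegrableOn (fun s ↦ (f s).toReal) (Ioi a) μ :=
    integrable_toReal_of_lintegral_ne_top hf.restrict hfa
  refine (ENNReal.continuous_ofReal.comp_continuousOn
    (IntegrableOn.continuousOn_Ici_primitive_Ioi hint)).congr fun t ht ↦ ?_
  have hsub : Ioi t ⊆ Ioi a := Ioi_subset_Ioi ht
  rw [Function.comp_apply, integral_toReal hf.restrict
    (ae_restrict_of_ae_restrict_of_subset hsub hfin)]
  exact (ENNReal.ofReal_toReal (ne_top_of_le_ne_top hfa (antitone_lintegralIoi μ f ht))).symm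

lemma exists_lintegralIoi_eq [NullSingletonClass μ] (hf : AEMeasurable f μ)
    (hfa : lintegralIoi μ f a ≠ ∞) (har : a ≤ r) {y : ℝ≥0∞}
    (hy : y ∈ Icc (lintegralIoi μ f r) (lintegralIoi μ f a)) :
    ∃ t ∈ Icc a r, lintegralIoi μ f t = y :=
  intermediate_value_Icc' har ((continuousOn_lintegralIoi hf hfa).mono Icc_subset_Ici_self) hy

lemma lintegral_rpow_le_mul {α : Type*} [MeasurableSpace α] {μ : Measure α} {f g h : α → ℝ≥0∞}
    (hp : 1 ≤ p) (hg : AEMeasurable g μ) (hh : AEMeasurable h μ)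
    (hfgh : ∀ᵐ s ∂μ, f s ^ p ≤ g s * h s ^ (p - 1)) :
    (∫⁻ s, f s ∂μ) ^ p ≤ (∫⁻ s, g s ∂μ) * (∫⁻ s, h s ∂μ) ^ (p - 1) := by
  have hp0 : 0 < p := zero_lt_one.trans_le hp
  have hexp : (p - 1) * p⁻¹ = 1 - p⁻¹ := by field
  have root (x y : ℝ≥0∞) : (x * y ^ (p - 1)) ^ p⁻¹ = x ^ p⁻¹ * y ^ (1 - p⁻¹) := by
    rw [ENNReal.mul_rpow_of_nonneg _ _ (inv_nonneg.2 hp0.le), ← ENNReal.rpow_mul, hexp]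
  rw [← ENNReal.le_rpow_inv_iff hp0, root]
  calc ∫⁻ s, f s ∂μ ≤ ∫⁻ s, g s ^ p⁻¹ * h s ^ (1 - p⁻¹) ∂μ := by
        refine lintegral_mono_ae (hfgh.mono fun s hs ↦ ?_)
        rwa [← root, ENNReal.le_rpow_inv_iff hp0]
    _ ≤ (∫⁻ s, g s ∂μ) ^ p⁻¹ * (∫⁻ s, h s ∂μ) ^ (1 - p⁻¹) :=
        ENNReal.lintegral_mul_norm_pow_le hg hh (inv_nonneg.2 hp0.le)
          (sub_nonneg.2 (inv_le_one_of_one_le₀ hp)) (by ring)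

/-- The constant `B` in the estimate `∫_(t,∞) h ≤ B * ∫_(t,r] h` valid when the tail of `f`
halves between `t` and `r`. -/
def halvingConst (p : ℝ) (K : ℝ≥0∞) : ℝ≥0∞ := (2 ^ p * K) ^ (p - 1)⁻¹

/-- The factor by which the `(p - 1)`-st power of the tail of `h` decreases when the tail of `f`
halves: if `S = D + S'` and `S ≤ B * D`, then `(1 + B) * S' ≤ B * S`. -/
def decayRatio (p : ℝ) (K : ℝ≥0∞) : ℝ≥0∞ :=
  (halvingConst p K / (1 + halvingConst p K)) ^ (p - 1)

/-- The bound for the product in Muckenhoupt's condition for Hardy's inequality: the fixed point of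
`x ↦ decayRatio p K * x + 2 ^ p * K`. -/
def hardyConst (p : ℝ) (K : ℝ≥0∞) : ℝ≥0∞ := 2 ^ p * K / (1 - decayRatio p K)

lemma halvingConst_ne_top (hp : 1 ≤ p) (hK : K ≠ ∞) : halvingConst p K ≠ ∞ :=
  ENNReal.rpow_ne_top_of_nonneg (inv_nonneg.2 (sub_nonneg.2 hp))
    (ENNReal.mul_ne_top (ENNReal.rpow_ne_top_of_nonneg (by linarith) ENNReal.ofNat_ne_top) hK)

lemma decayRatio_lt_one (hp : 1 < p) (hK : K ≠ ∞) : decayRatio p K < 1 := by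
  have hB := halvingConst_ne_top hp.le hK
  refine ENNReal.rpow_lt_one ?_ (sub_pos.2 hp)
  rw [ENNReal.div_lt_iff (by simp) (by simp [hB]), one_mul, add_comm]
  exact ENNReal.lt_add_right hB one_ne_zero

lemma hardyConst_ne_top (hp : 1 < p) (hK : K ≠ ∞) : hardyConst p K ≠ ∞ :=
  ENNReal.div_ne_top
    (ENNReal.mul_ne_top (ENNReal.rpow_ne_top_of_nonneg (by linarith) ENNReal.ofNat_ne_top) hK)
    (tsub_pos_of_lt (decayRatio_lt_one hp hK)).ne'

lemma decayRatio_mul_hardyConst_add (hp : 1 < p) (hK : K ≠ ∞) :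
    decayRatio p K * hardyConst p K + 2 ^ p * K = hardyConst p K := by
  have hlt := decayRatio_lt_one hp hK
  have hcancel : (1 - decayRatio p K) * hardyConst p K = 2 ^ p * K :=
    ENNReal.mul_div_cancel (tsub_pos_of_lt hlt).ne' (ENNReal.sub_ne_top ENNReal.one_ne_top)
  rw [← hcancel, ← add_mul, add_tsub_cancel_of_le hlt.le, one_mul]

lemma lintegralIoi_rpow_le_of_halving (hp : 1 ≤ p) (hg : AEMeasurable g μ) (hh : AEMeasurable h μ)
    (hfgh : ∀ᵐ s ∂μ, f s ^ p ≤ g s * h s ^ (p - 1)) (htr : t ≤ r)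
    (hf : lintegralIoi μ f t = 2 * lintegralIoi μ f r) (hfr_top : lintegralIoi μ f r ≠ ∞) :
    lintegralIoi μ f r ^ p ≤ lintegralIoi μ g t * (∫⁻ s in Ioc t r, h s ∂μ) ^ (p - 1) := by
  have hhalf : ∫⁻ s in Ioc t r, f s ∂μ = lintegralIoi μ f r := by
    rw [← setLIntegral_Ioc_add_lintegralIoi f htr, two_mul] at hf
    exact (ENNReal.add_left_inj hfr_top).1 hf
  calc lintegralIoi μ f r ^ p
      ≤ (∫⁻ s in Ioc t r, g s ∂μ) * (∫⁻ s in Ioc t r, h s ∂μ) ^ (p - 1) :=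
        hhalf ▸ lintegral_rpow_le_mul hp hg.restrict hh.restrict (ae_restrict_of_ae hfgh)
    _ ≤ lintegralIoi μ g t * (∫⁻ s in Ioc t r, h s ∂μ) ^ (p - 1) := by
        gcongr
        exact setLIntegral_Ioc_le_lintegralIoi μ g t r

lemma lintegralIoi_le_halvingConst_mul (hp : 1 < p) (hg : AEMeasurable g μ)
    (hh : AEMeasurable h μ) (hfgh : ∀ᵐ s ∂μ, f s ^ p ≤ g s * h s ^ (p - 1)) (hK : K ≠ ∞)
    (htr : t ≤ r) (hf : lintegralIoi μ f t = 2 * lintegralIoi μ f r)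
    (hfr : lintegralIoi μ f r ≠ 0) (hfr_top : lintegralIoi μ f r ≠ ∞)
    (hA : lintegralIoi μ g t * lintegralIoi μ h t ^ (p - 1) ≤ K * lintegralIoi μ f t ^ p) :
    lintegralIoi μ h t ≤ halvingConst p K * ∫⁻ s in Ioc t r, h s ∂μ := by
  have hp0 : 0 < p := zero_lt_one.trans hp
  have hp1 : 0 < p - 1 := sub_pos.2 hp
  set V := lintegralIoi μ g t
  set S := lintegralIoi μ h t
  set D := ∫⁻ s in Ioc t r, h s ∂μ
  have hHolder : lintegralIoi μ f r ^ p ≤ V * D ^ (p - 1) :=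
    lintegralIoi_rpow_le_of_halving hp.le hg hh hfgh htr hf hfr_top
  have hVD : V * D ^ (p - 1) ≠ 0 :=
    ((ENNReal.rpow_pos (pos_iff_ne_zero.2 hfr) hfr_top).trans_le hHolder).ne'
  have hV : V ≠ 0 := left_ne_zero_of_mul hVD
  have hV_top : V ≠ ∞ := by
    have hDS : D ≤ S := setLIntegral_Ioc_le_lintegralIoi μ h t r
    have hS : S ^ (p - 1) ≠ 0 := ((pos_iff_ne_zero.2 (right_ne_zero_of_mul hVD)).trans_le
      (ENNReal.rpow_le_rpow hDS hp1.le)).ne'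
    have hVS_top : V * S ^ (p - 1) ≠ ∞ := ne_top_of_le_ne_top (ENNReal.mul_ne_top hK
      (ENNReal.rpow_ne_top_of_nonneg hp0.le (hf ▸ by finiteness))) hA
    exact fun hV ↦ hVS_top (by rw [hV, ENNReal.top_mul hS])
  have hpow : S ^ (p - 1) ≤ 2 ^ p * K * D ^ (p - 1) := by
    rw [← ENNReal.mul_le_mul_iff_right hV hV_top]
    calc V * S ^ (p - 1) ≤ K * (2 * lintegralIoi μ f r) ^ p := hf ▸ hA
      _ = 2 ^ p * K * lintegralIoi μ f r ^ p := by
          rw [ENNReal.mul_rpow_of_nonneg _ _ hp0.le]; ring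
      _ ≤ 2 ^ p * K * (V * D ^ (p - 1)) := by gcongr
      _ = V * (2 ^ p * K * D ^ (p - 1)) := by ring
  rwa [← ENNReal.le_rpow_inv_iff hp1, ENNReal.mul_rpow_of_nonneg _ _ (inv_nonneg.2 hp1.le),
    ENNReal.rpow_rpow_inv hp1.ne'] at hpow

lemma lintegralIoi_rpow_le_decayRatio_mul (hp : 1 < p) (hK : K ≠ ∞) (htr : t ≤ r)
    (hB : lintegralIoi μ h t ≤ halvingConst p K * ∫⁻ s in Ioc t r, h s ∂μ) :
    lintegralIoi μ h r ^ (p - 1) ≤ decayRatio p K * lintegralIoi μ h t ^ (p - 1) := by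
  have hp1 : 0 < p - 1 := sub_pos.2 hp
  have hB_top : halvingConst p K ≠ ∞ := halvingConst_ne_top hp.le hK
  rw [decayRatio, ← ENNReal.mul_rpow_of_nonneg _ _ hp1.le, ENNReal.rpow_le_rpow_iff hp1,
    ← ENNReal.mul_div_right_comm,
    ENNReal.le_div_iff_mul_le (.inl (by simp)) (.inl (by simp [hB_top]))]
  calc lintegralIoi μ h r * (1 + halvingConst p K)
      = lintegralIoi μ h r + halvingConst p K * lintegralIoi μ h r := by ring
    _ ≤ halvingConst p K * (∫⁻ s in Ioc t r, h s ∂μ) + halvingConst p K * lintegralIoi μ h r := by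
        gcongr
        exact (antitone_lintegralIoi μ h htr).trans hB
    _ = halvingConst p K * lintegralIoi μ h t := by
        rw [← mul_add, setLIntegral_Ioc_add_lintegralIoi h htr]

lemma setLIntegral_div_lintegralIoi_rpow_le (hp : 0 < p) (hfr : lintegralIoi μ f r ≠ 0)
    (hfr_top : lintegralIoi μ f r ≠ ∞) :
    ∫⁻ s in Ioc t r, g s / lintegralIoi μ f s ^ p ∂μ
      ≤ lintegralIoi μ g t / lintegralIoi μ f r ^ p := by
  have hpow : lintegralIoi μ f r ^ p ≠ 0 :=
    (ENNReal.rpow_pos (pos_iff_ne_zero.2 hfr) hfr_top).ne'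
  calc ∫⁻ s in Ioc t r, g s / lintegralIoi μ f s ^ p ∂μ
      ≤ ∫⁻ s in Ioc t r, g s / lintegralIoi μ f r ^ p ∂μ := by
        refine setLIntegral_mono' measurableSet_Ioc fun s hs ↦ ?_
        gcongr
        exact antitone_lintegralIoi μ f hs.2
    _ = (∫⁻ s in Ioc t r, g s ∂μ) / lintegralIoi μ f r ^ p := by
        simp_rw [div_eq_mul_inv]
        exact lintegral_mul_const' _ _ (ENNReal.inv_ne_top.2 hpow)
    _ ≤ lintegralIoi μ g t / lintegralIoi μ f r ^ p := by
        gcongr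
        exact setLIntegral_Ioc_le_lintegralIoi μ g t r

lemma setLIntegral_div_rpow_mul_rpow_le_of_le_two_mul (hp : 1 ≤ p) (htr : t ≤ r)
    (hf : lintegralIoi μ f t ≤ 2 * lintegralIoi μ f r) (hfr : lintegralIoi μ f r ≠ 0)
    (hfr_top : lintegralIoi μ f r ≠ ∞)
    (hA : lintegralIoi μ g t * lintegralIoi μ h t ^ (p - 1) ≤ K * lintegralIoi μ f t ^ p) :
    (∫⁻ s in Ioc t r, g s / lintegralIoi μ f s ^ p ∂μ) * lintegralIoi μ h r ^ (p - 1)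
      ≤ 2 ^ p * K := by
  have hp0 : 0 < p := zero_lt_one.trans_le hp
  have : 0 ≤ p - 1 := sub_nonneg.2 hp
  have hpow : lintegralIoi μ f r ^ p ≠ 0 :=
    (ENNReal.rpow_pos (pos_iff_ne_zero.2 hfr) hfr_top).ne'
  have hpow_top : lintegralIoi μ f r ^ p ≠ ∞ := ENNReal.rpow_ne_top_of_nonneg hp0.le hfr_top
  calc (∫⁻ s in Ioc t r, g s / lintegralIoi μ f s ^ p ∂μ) * lintegralIoi μ h r ^ (p - 1)
      ≤ lintegralIoi μ g t / lintegralIoi μ f r ^ p * lintegralIoi μ h t ^ (p - 1) := by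
        gcongr
        · exact setLIntegral_div_lintegralIoi_rpow_le hp0 hfr hfr_top
        · exact antitone_lintegralIoi μ h htr
    _ = lintegralIoi μ g t * lintegralIoi μ h t ^ (p - 1) / lintegralIoi μ f r ^ p :=
        ENNReal.mul_div_right_comm.symm
    _ ≤ K * (2 * lintegralIoi μ f r) ^ p / lintegralIoi μ f r ^ p :=
        ENNReal.div_le_div_right
          (hA.trans (mul_le_mul_right (ENNReal.rpow_le_rpow hf hp0.le) K)) _
    _ = 2 ^ p * K := by
        rw [ENNReal.mul_rpow_of_nonneg _ _ hp0.le, ← mul_assoc, mul_comm K,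
          ENNReal.mul_div_cancel_right hpow hpow_top]

lemma setLIntegral_div_rpow_mul_rpow_le_of_halving (hp : 1 < p) (hg : AEMeasurable g μ)
    (hh : AEMeasurable h μ) (hfgh : ∀ᵐ s ∂μ, f s ^ p ≤ g s * h s ^ (p - 1)) (hK : K ≠ ∞)
    (hat : a ≤ t) (htr : t ≤ r) (hf : lintegralIoi μ f t = 2 * lintegralIoi μ f r)
    (hfr : lintegralIoi μ f r ≠ 0) (hfr_top : lintegralIoi μ f r ≠ ∞)
    (hA : lintegralIoi μ g t * lintegralIoi μ h t ^ (p - 1) ≤ K * lintegralIoi μ f t ^ p)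
    (ht : (∫⁻ s in Ioc a t, g s / lintegralIoi μ f s ^ p ∂μ) * lintegralIoi μ h t ^ (p - 1)
      ≤ hardyConst p K) :
    (∫⁻ s in Ioc a r, g s / lintegralIoi μ f s ^ p ∂μ) * lintegralIoi μ h r ^ (p - 1)
      ≤ hardyConst p K := by
  have hdecay : lintegralIoi μ h r ^ (p - 1) ≤ decayRatio p K * lintegralIoi μ h t ^ (p - 1) :=
    lintegralIoi_rpow_le_decayRatio_mul hp hK htr
      (lintegralIoi_le_halvingConst_mul hp hg hh hfgh hK htr hf hfr hfr_top hA)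
  rw [← Ioc_union_Ioc_eq_Ioc hat htr, lintegral_union measurableSet_Ioc
    (Ioc_disjoint_Ioc_of_le le_rfl), add_mul, ← decayRatio_mul_hardyConst_add hp hK]
  gcongr ?_ + ?_
  · set X := ∫⁻ s in Ioc a t, g s / lintegralIoi μ f s ^ p ∂μ
    calc X * lintegralIoi μ h r ^ (p - 1)
        ≤ X * (decayRatio p K * lintegralIoi μ h t ^ (p - 1)) := by gcongr
      _ = decayRatio p K * (X * lintegralIoi μ h t ^ (p - 1)) := by ring
      _ ≤ decayRatio p K * hardyConst p K := by gcongr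
  · exact setLIntegral_div_rpow_mul_rpow_le_of_le_two_mul hp.le htr hf.le hfr hfr_top hA

theorem setLIntegral_div_rpow_mul_rpow_le_hardyConst [NullSingletonClass μ] (hp : 1 < p)
    (hf : AEMeasurable f μ) (hg : AEMeasurable g μ) (hh : AEMeasurable h μ)
    (hfgh : ∀ᵐ s ∂μ, f s ^ p ≤ g s * h s ^ (p - 1)) (hK : K ≠ ∞) (har : a ≤ r)
    (hfa_top : lintegralIoi μ f a ≠ ∞) (hfr : lintegralIoi μ f r ≠ 0)
    (hA : ∀ t ∈ Icc a r,
      lintegralIoi μ g t * lintegralIoi μ h t ^ (p - 1) ≤ K * lintegralIoi μ f t ^ p) :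
    (∫⁻ s in Ioc a r, g s / lintegralIoi μ f s ^ p ∂μ) * lintegralIoi μ h r ^ (p - 1)
      ≤ hardyConst p K := by
  obtain ⟨n, hn⟩ : ∃ n : ℕ, lintegralIoi μ f a < 2 ^ n * lintegralIoi μ f r := by
    obtain ⟨n, hn⟩ := ENNReal.exists_nat_mul_gt hfr hfa_top
    refine ⟨n, hn.trans_le ?_⟩
    gcongr
    exact_mod_cast n.lt_two_pow_self.le
  induction n generalizing r with
  | zero => exact absurd (antitone_lintegralIoi μ f har) (by simpa using hn)
  | succ n ih =>
    have hfr_top : lintegralIoi μ f r ≠ ∞ :=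
      ne_top_of_le_ne_top hfa_top (antitone_lintegralIoi μ f har)
    rcases le_total (lintegralIoi μ f a) (2 * lintegralIoi μ f r) with hsmall | hlarge
    · calc (∫⁻ s in Ioc a r, g s / lintegralIoi μ f s ^ p ∂μ) * lintegralIoi μ h r ^ (p - 1)
          ≤ 2 ^ p * K := setLIntegral_div_rpow_mul_rpow_le_of_le_two_mul hp.le har hsmall hfr
            hfr_top (hA a (left_mem_Icc.2 har))
        _ ≤ hardyConst p K := decayRatio_mul_hardyConst_add hp hK ▸ le_add_self
    · obtain ⟨t, ⟨hat, htr⟩, ht⟩ :=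
        exists_lintegralIoi_eq hf hfa_top har ⟨le_mul_of_one_le_left' one_le_two, hlarge⟩
      have hbound_t := ih hat (by simp [ht, hfr]) (fun s hs ↦ hA s ⟨hs.1, hs.2.trans htr⟩)
        (by rwa [ht, ← mul_assoc, ← pow_succ])
      exact setLIntegral_div_rpow_mul_rpow_le_of_halving hp hg hh hfgh hK hat htr ht hfr hfr_top
        (hA t ⟨hat, htr⟩) hbound_t

end Tail

section RadialWeight

variable {w v : ℝ → ℝ} {p r : ℝ}

lemma IsRadialWeight.hat1_pos (hw : IsRadialWeight w) (hr : r ∈ Ico (0 : ℝ) 1) : 0 < hat1 w r := by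
  obtain ⟨hnonneg, hint, hpos⟩ := hw
  have hsub : Ioo r 1 ⊆ Ico 0 1 := fun s hs ↦ ⟨hr.1.trans hs.1.le, hs.2⟩
  have hint_r : IntegrableOn w (Ioo r 1) := hint.mono_set hsub
  have hint_mul : IntegrableOn (fun s ↦ s * w s) (Ioo r 1) :=
    hint_r.bdd_mul (c := 1) measurable_id.aestronglyMeasurable <| by
      filter_upwards [ae_restrict_mem measurableSet_Ioo] with s hs
      simpa only [id_eq, Real.norm_of_nonneg (hsub hs).1] using hs.2.le
  have hsupp : Function.support (fun s ↦ s * w s) ∩ Ioo r 1 = Function.support w ∩ Ioo r 1 := by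
    ext s
    have (hs : s ∈ Ioo r 1) : s ≠ 0 := (hr.1.trans_lt hs.1).ne'
    simp +contextual [this]
  rw [hat1, setIntegral_pos_iff_support_of_nonneg_ae _ hint_mul, hsupp,
    ← setIntegral_pos_iff_support_of_nonneg_ae _ hint_r]
  · exact hpos r hr
  · filter_upwards [ae_restrict_mem measurableSet_Ioo] with s hs using hnonneg s (hsub hs)
  · filter_upwards [ae_restrict_mem measurableSet_Ioo] with s hs
    exact mul_nonneg (hsub hs).1 (hnonneg s (hsub hs))

lemma IsRadialWeight.not_ae_eq_zero (hv : IsRadialWeight v) :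
    ¬ v =ᵐ[volume.restrict (Ioo 0 1)] 0 := fun hzero ↦
  (hv.2.2 0 (left_mem_Ico.2 zero_lt_one)).ne' (integral_eq_zero_of_ae hzero)

lemma integrableOn_of_hat1_pos (hr : 0 < hat1 w r) :
    IntegrableOn (fun s ↦ s * w s) (Ioo r 1) := by
  by_contra hint
  exact hr.ne' (integral_undef hint)

lemma aemeasurable_of_hat1_zero_pos (hw : 0 < hat1 w 0) :
    AEMeasurable w (volume.restrict (Ioo 0 1)) := by
  refine (measurable_inv.aemeasurable.mul (integrableOn_of_hat1_pos hw).aemeasurable).congr ?_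
  filter_upwards [ae_restrict_mem measurableSet_Ioo] with s hs
  exact inv_mul_cancel_left₀ hs.1.ne' (w s)

lemma aemeasurable_ofReal_mul {μ : Measure ℝ} (hw : AEMeasurable w μ) :
    AEMeasurable (fun s ↦ ENNReal.ofReal (s * w s)) μ :=
  (measurable_id.aemeasurable.mul hw).ennreal_ofReal

lemma lintegralIoi_ofReal_mul_eq (hw : ∀ s ∈ Ico (0 : ℝ) 1, 0 ≤ w s) (hr : 0 ≤ r)
    (hpos : 0 < hat1 w r) :
    lintegralIoi (volume.restrict (Ioo 0 1)) (fun s ↦ ENNReal.ofReal (s * w s)) r =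
      ENNReal.ofReal (hat1 w r) := by
  rw [lintegralIoi_restrict_Ioo _ hr]
  refine (ofReal_integral_eq_lintegral_ofReal (integrableOn_of_hat1_pos hpos) ?_).symm
  filter_upwards [ae_restrict_mem measurableSet_Ioo] with s hs
  have hs0 : 0 ≤ s := hr.trans hs.1.le
  exact mul_nonneg hs0 (hw s ⟨hs0, hs.2⟩)

lemma lintegral_ofReal_mul_ne_zero (hv : ∀ s ∈ Ico (0 : ℝ) 1, 0 ≤ v s)
    (hvm : AEMeasurable v (volume.restrict (Ioo 0 1)))
    (hv0 : ¬ v =ᵐ[volume.restrict (Ioo 0 1)] 0) :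
    ∫⁻ s in Ioo 0 1, ENNReal.ofReal (s * v s) ≠ 0 := by
  intro hzero
  rw [lintegral_eq_zero_iff' (aemeasurable_ofReal_mul hvm)] at hzero
  refine hv0 ?_
  filter_upwards [hzero, ae_restrict_mem measurableSet_Ioo] with s hs hmem
  exact (nonpos_of_mul_nonpos_right (ENNReal.ofReal_eq_zero.1 hs) hmem.1).antisymm
    (hv s (Ioo_subset_Ico_self hmem))

lemma sigmaE_rpow_sub_one (hp : 1 < p) (w v : ℝ → ℝ) (s : ℝ) :
    sigmaE p w v s ^ (p - 1) = ENNReal.ofReal (w s) ^ p / ENNReal.ofReal (v s) := by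
  have hp0 : 0 < p := zero_lt_one.trans hp
  rw [sigmaE, ← ENNReal.rpow_mul, div_mul_cancel₀ p (sub_pos.2 hp).ne',
    ENNReal.div_rpow_of_nonneg _ _ hp0.le, ← ENNReal.rpow_mul, one_div_mul_cancel hp0.ne',
    ENNReal.rpow_one]

lemma ofReal_rpow_le_mul_sigmaE_rpow (hp : 1 < p) {s : ℝ} (hσ : sigmaE p w v s ≠ ∞) :
    ENNReal.ofReal (w s) ^ p ≤ ENNReal.ofReal (v s) * sigmaE p w v s ^ (p - 1) := by
  have hpow := sigmaE_rpow_sub_one hp w v s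
  have hpow_top : sigmaE p w v s ^ (p - 1) ≠ ∞ :=
    ENNReal.rpow_ne_top_of_nonneg (sub_nonneg.2 hp.le) hσ
  rw [hpow]
  refine (ENNReal.mul_div_cancel' (fun hv0 ↦ ?_) fun hv ↦ absurd hv ENNReal.ofReal_ne_top).ge
  by_contra hw0
  exact hpow_top (by rw [hpow, hv0, ENNReal.div_zero hw0])

lemma ofReal_mul_rpow_le (hp : 1 < p) {s : ℝ} (hs : 0 ≤ s) (hσ : sigmaE p w v s ≠ ∞) :
    ENNReal.ofReal (s * w s) ^ p ≤
      ENNReal.ofReal (s * v s) * (ENNReal.ofReal s * sigmaE p w v s) ^ (p - 1) := by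
  have hs_pow : ENNReal.ofReal s ^ p = ENNReal.ofReal s * ENNReal.ofReal s ^ (p - 1) := by
    conv_rhs => enter [1]; rw [← ENNReal.rpow_one (ENNReal.ofReal s)]
    rw [← ENNReal.rpow_add_of_nonneg _ _ zero_le_one (sub_nonneg.2 hp.le), add_sub_cancel]
  rw [ENNReal.ofReal_mul hs, ENNReal.ofReal_mul hs,
    ENNReal.mul_rpow_of_nonneg _ _ (zero_le_one.trans hp.le),
    ENNReal.mul_rpow_of_nonneg _ _ (sub_nonneg.2 hp.le), hs_pow, mul_mul_mul_comm]
  exact mul_le_mul_right (ofReal_rpow_le_mul_sigmaE_rpow hp hσ) _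

lemma aemeasurable_mul_sigmaE {μ : Measure ℝ} (hw : AEMeasurable w μ) (hv : AEMeasurable v μ) :
    AEMeasurable (fun s ↦ ENNReal.ofReal s * sigmaE p w v s) μ := by
  have hquot := hw.ennreal_ofReal.div (hv.ennreal_ofReal.pow_const (1 / p))
  exact measurable_id.ennreal_ofReal.aemeasurable.mul (hquot.pow_const (p / (p - 1)))

lemma mul_rpow_le_ApE_rpow_mul (hp : 0 < p) (hr : r ∈ Ico (0 : ℝ) 1) (hw : 0 < hat1 w r) :
    (∫⁻ s in Ioo r 1, ENNReal.ofReal (s * v s)) *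
        (∫⁻ s in Ioo r 1, ENNReal.ofReal s * sigmaE p w v s) ^ (p - 1) ≤
      ApE p w v ^ p * ENNReal.ofReal (hat1 w r) ^ p := by
  have hexp : (1 - 1 / p) * p = p - 1 := by field
  set V := ∫⁻ s in Ioo r 1, ENNReal.ofReal (s * v s)
  set S := ∫⁻ s in Ioo r 1, ENNReal.ofReal s * sigmaE p w v s
  have hle : V ^ (1 / p) * S ^ (1 - 1 / p) ≤ ApE p w v * ENNReal.ofReal (hat1 w r) := by
    rw [← ENNReal.div_le_iff (ENNReal.ofReal_pos.2 hw).ne' ENNReal.ofReal_ne_top, ApE]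
    exact le_iSup₂_of_le r hr le_rfl
  calc V * S ^ (p - 1) = (V ^ (1 / p) * S ^ (1 - 1 / p)) ^ p := by
        rw [ENNReal.mul_rpow_of_nonneg _ _ hp.le, ← ENNReal.rpow_mul, ← ENNReal.rpow_mul, hexp,
          one_div_mul_cancel hp.ne', ENNReal.rpow_one]
    _ ≤ (ApE p w v * ENNReal.ofReal (hat1 w r)) ^ p := by gcongr
    _ = ApE p w v ^ p * ENNReal.ofReal (hat1 w r) ^ p := ENNReal.mul_rpow_of_nonneg _ _ hp.le

lemma lintegral_mul_sigmaE_ne_top (hp : 1 < p) (hw : 0 < hat1 w 0)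
    (hv : ∫⁻ s in Ioo 0 1, ENNReal.ofReal (s * v s) ≠ 0) (hAp : ApE p w v ≠ ∞) :
    ∫⁻ s in Ioo 0 1, ENNReal.ofReal s * sigmaE p w v s ≠ ∞ := by
  have hp0 : 0 < p := zero_lt_one.trans hp
  intro hS
  have hle := mul_rpow_le_ApE_rpow_mul (v := v) hp0 (left_mem_Ico.2 zero_lt_one) hw
  rw [hS, ENNReal.top_rpow_of_pos (sub_pos.2 hp), ENNReal.mul_top hv, top_le_iff] at hle
  exact ENNReal.mul_ne_top (ENNReal.rpow_ne_top_of_nonneg hp0.le hAp)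
    (ENNReal.rpow_ne_top_of_nonneg hp0.le ENNReal.ofReal_ne_top) hle

lemma ae_ofReal_mul_rpow_le (hp : 1 < p) (hw : AEMeasurable w (volume.restrict (Ioo 0 1)))
    (hv : AEMeasurable v (volume.restrict (Ioo 0 1)))
    (hS : ∫⁻ s in Ioo 0 1, ENNReal.ofReal s * sigmaE p w v s ≠ ∞) :
    ∀ᵐ s ∂volume.restrict (Ioo 0 1), ENNReal.ofReal (s * w s) ^ p ≤
      ENNReal.ofReal (s * v s) * (ENNReal.ofReal s * sigmaE p w v s) ^ (p - 1) := by
  filter_upwards [ae_lt_top' (aemeasurable_mul_sigmaE hw hv) hS,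
    ae_restrict_mem measurableSet_Ioo] with s hs hmem
  refine ofReal_mul_rpow_le hp hmem.1.le fun hσ ↦ hs.ne ?_
  rw [hσ, ENNReal.mul_top (ENNReal.ofReal_pos.2 hmem.1).ne']

theorem setLIntegral_div_hat1_rpow_mul_le (hp : 1 < p) (hw : ∀ s ∈ Ico (0 : ℝ) 1, 0 ≤ w s)
    (hw_pos : ∀ s ∈ Ico (0 : ℝ) 1, 0 < hat1 w s)
    (hvm : AEMeasurable v (volume.restrict (Ioo 0 1)))
    (hS : ∫⁻ s in Ioo 0 1, ENNReal.ofReal s * sigmaE p w v s ≠ ∞) (hAp : ApE p w v ≠ ∞)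
    (hr : r ∈ Ioo (0 : ℝ) 1) :
    (∫⁻ s in Ioo 0 r, ENNReal.ofReal (s * v s) / ENNReal.ofReal (hat1 w s) ^ p) *
        (∫⁻ s in Ioo r 1, ENNReal.ofReal s * sigmaE p w v s) ^ (p - 1) ≤
      hardyConst p (ApE p w v ^ p) := by
  set μ := volume.restrict (Ioo (0 : ℝ) 1) with hμ
  set f : ℝ → ℝ≥0∞ := fun s ↦ ENNReal.ofReal (s * w s)
  set g : ℝ → ℝ≥0∞ := fun s ↦ ENNReal.ofReal (s * v s)
  set h : ℝ → ℝ≥0∞ := fun s ↦ ENNReal.ofReal s * sigmaE p w v s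
  have hmem : ∀ t ∈ Icc 0 r, t ∈ Ico (0 : ℝ) 1 := fun t ht ↦ ⟨ht.1, ht.2.trans_lt hr.2⟩
  have hW : ∀ t ∈ Icc 0 r, lintegralIoi μ f t = ENNReal.ofReal (hat1 w t) := fun t ht ↦
    lintegralIoi_ofReal_mul_eq hw ht.1 (hw_pos t (hmem t ht))
  have h0 : (0 : ℝ) ∈ Icc 0 r := left_mem_Icc.2 hr.1.le
  have hfr : lintegralIoi μ f r ≠ 0 := by
    have hrr : r ∈ Icc 0 r := right_mem_Icc.2 hr.1.le
    exact hW r hrr ▸ (ENNReal.ofReal_pos.2 (hw_pos r (hmem r hrr))).ne'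
  have hA : ∀ t ∈ Icc 0 r, lintegralIoi μ g t * lintegralIoi μ h t ^ (p - 1)
      ≤ ApE p w v ^ p * lintegralIoi μ f t ^ p := fun t ht ↦ by
    rw [hW t ht, hμ, lintegralIoi_restrict_Ioo g ht.1, lintegralIoi_restrict_Ioo h ht.1]
    exact mul_rpow_le_ApE_rpow_mul (by linarith) (hmem t ht) (hw_pos t (hmem t ht))
  have hwm : AEMeasurable w μ := aemeasurable_of_hat1_zero_pos (hw_pos 0 (hmem 0 h0))
  have hbound := setLIntegral_div_rpow_mul_rpow_le_hardyConst hp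
    (aemeasurable_ofReal_mul hwm) (aemeasurable_ofReal_mul hvm) (aemeasurable_mul_sigmaE hwm hvm)
    (ae_ofReal_mul_rpow_le hp hwm hvm hS) (ENNReal.rpow_ne_top_of_nonneg (by linarith) hAp) hr.1.le
    (hW 0 h0 ▸ ENNReal.ofReal_ne_top) hfr hA
  rw [hμ, lintegralIoi_restrict_Ioo h hr.1.le,
    Measure.restrict_restrict_of_subset (Ioc_subset_Ioo_right hr.2)] at hbound
  refine le_trans ?_ hbound
  gcongr ?_ * _
  rw [setLIntegral_congr Ioo_ae_eq_Ioc]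
  exact (setLIntegral_congr_fun measurableSet_Ioc fun s hs ↦ by
    rw [← hW s (Ioc_subset_Icc_self hs)]).le

lemma MpE_le_of_forall_mul_rpow_le (hp : 1 ≤ p) {C : ℝ≥0∞}
    (hC : ∀ r ∈ Ioo (0 : ℝ) 1,
      (∫⁻ s in Ioo 0 r, ENNReal.ofReal (s * v s) / ENNReal.ofReal (hat1 w s) ^ p) *
        (∫⁻ s in Ioo r 1, ENNReal.ofReal s * sigmaE p w v s) ^ (p - 1) ≤ C) :
    MpE p w v ≤
      (C + (∫⁻ s in Ioo 0 1, ENNReal.ofReal s * sigmaE p w v s) ^ (p - 1)) ^ (1 / p) := by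
  have hp0 : 0 < p := zero_lt_one.trans_le hp
  have hp1 : 0 ≤ p - 1 := sub_nonneg.2 hp
  have hexp : (p - 1) * (1 / p) = 1 - 1 / p := by field
  refine iSup₂_le fun r hr ↦ ?_
  rw [← hexp, ENNReal.rpow_mul, ← ENNReal.mul_rpow_of_nonneg _ _ (one_div_pos.2 hp0).le, add_mul,
    one_mul]
  gcongr ?_ ^ (1 / p)
  refine add_le_add (hC r hr) (ENNReal.rpow_le_rpow ?_ hp1)
  exact lintegral_mono_set (Ioo_subset_Ioo_left hr.1.le)

end RadialWeight

theorem Ap_implies_Mp_general {p : ℝ} (hp : 1 < p) {w v : ℝ → ℝ}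
    (hw : ∀ s ∈ Ico (0 : ℝ) 1, 0 ≤ w s) (hw_pos : ∀ s ∈ Ico (0 : ℝ) 1, 0 < hat1 w s)
    (hv : ∀ s ∈ Ico (0 : ℝ) 1, 0 ≤ v s) (hvm : AEMeasurable v (volume.restrict (Ioo 0 1)))
    (hv0 : ¬ v =ᵐ[volume.restrict (Ioo 0 1)] 0) (hAp : ApE p w v < ⊤) : MpE p w v < ⊤ := by
  have hp0 : 0 ≤ p := zero_le_one.trans hp.le
  have hS : ∫⁻ s in Ioo 0 1, ENNReal.ofReal s * sigmaE p w v s ≠ ∞ :=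
    lintegral_mul_sigmaE_ne_top hp (hw_pos 0 (left_mem_Ico.2 zero_lt_one))
      (lintegral_ofReal_mul_ne_zero hv hvm hv0) hAp.ne
  have hC : hardyConst p (ApE p w v ^ p) ≠ ∞ :=
    hardyConst_ne_top hp (ENNReal.rpow_ne_top_of_nonneg hp0 hAp.ne)
  refine (MpE_le_of_forall_mul_rpow_le hp.le fun r hr ↦
    setLIntegral_div_hat1_rpow_mul_le hp hw hw_pos hvm hS hAp.ne hr).trans_lt ?_
  exact (ENNReal.rpow_ne_top_of_nonneg (one_div_nonneg.2 hp0) (ENNReal.add_ne_top.2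
    ⟨hC, ENNReal.rpow_ne_top_of_nonneg (sub_nonneg.2 hp.le) hS⟩)).lt_top

/-- Let `1 < p < ∞` and let `ω` and `ν` be any pair of radial weights.
If `A_p(ω,ν) < ∞`, then `M_p(ω,ν) < ∞`. -/
theorem Ap_implies_Mp (p : ℝ) (hp : 1 < p) (w v : ℝ → ℝ)
    (hw : IsRadialWeight w) (hv : IsRadialWeight v)
    (hAp : ApE p w v < ⊤) : MpE p w v < ⊤ := by
  exact Ap_implies_Mp_general hp hw.1 (fun _ ↦ hw.hat1_pos) hv.1
    (hv.2.1.mono_set Ioo_subset_Ico_self).aemeasurable hv.not_ae_eq_zero hAp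

end
end

section
/- Let 1 < p < ∞ and let ω and ν be radial weights. Then the following statements are equivalent: (i) there exists C > 0 such that ‖H_ω(f) + H*_ω(f)‖_{L^p_ν} ≤ C ‖f‖_{L^p_ν} for every nonnegative f ∈ L^p_ν; (ii) there exists C > 0 such that ‖S_{ω₁,rad}(f)‖_{L^p_ν} ≤ C ‖f‖_{L^p_ν} for every nonnegative f ∈ L^p_ν; (iii) there exists C > 0 such that ‖M_{ω₁,rad}(f)‖_{L^p_ν} ≤ C ‖f‖_{L^p_ν} for every f ∈ L^p_ν; (iv) A_p(ω,ν) < ∞. -/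
open MeasureTheory Set Metric
open scoped ENNReal NNReal

noncomputable section

/-- The `L^p_ν` norm (with `dA` = area measure divided by `π`) of a real-valued function on
the unit disc. -/
def LpR (p : ℝ) (v : ℝ → ℝ) (f : ℂ → ℝ) : ℝ≥0∞ :=
  ((∫⁻ z in Metric.ball (0:ℂ) 1, ENNReal.ofReal (|f z| ^ p * v ‖z‖)) /
    ENNReal.ofReal Real.pi) ^ (1 / p)

/-- The `L^p_ν` norm of an `ℝ≥0∞`-valued function on the unit disc. -/
def LpE (p : ℝ) (v : ℝ → ℝ) (g : ℂ → ℝ≥0∞) : ℝ≥0∞ :=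
  ((∫⁻ z in Metric.ball (0:ℂ) 1, g z ^ p * ENNReal.ofReal (v ‖z‖)) /
    ENNReal.ofReal Real.pi) ^ (1 / p)

/-- The averaging operator `H_ω(f)(z) = (1/ω̂₁(|z|)) ∫_{|z|}^1 f(s z/|z|) s ω(s) ds`. -/
def HE (w : ℝ → ℝ) (f : ℂ → ℝ) (z : ℂ) : ℝ≥0∞ :=
  (∫⁻ s in Set.Ioo ‖z‖ 1, ENNReal.ofReal (f ((s / ‖z‖) • z) * (s * w s))) /
    ENNReal.ofReal (hat1 w ‖z‖)

/-- The adjoint `H*_ω(f)(z) = ∫_0^{|z|} f(s z/|z|) s ω(s)/ω̂₁(s) ds`. -/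
def HstarE (w : ℝ → ℝ) (f : ℂ → ℝ) (z : ℂ) : ℝ≥0∞ :=
  ∫⁻ s in Set.Ioo 0 ‖z‖,
    ENNReal.ofReal (f ((s / ‖z‖) • z) * (s * w s)) / ENNReal.ofReal (hat1 w s)

/-- The Stieltjes-type operator
`S_{ω₁,rad}(f)(z) = ∫_0^1 f(s z/|z|) s ω(s)/(ω̂₁(s)+ω̂₁(|z|)) ds`. -/
def SE (w : ℝ → ℝ) (f : ℂ → ℝ) (z : ℂ) : ℝ≥0∞ :=
  ∫⁻ s in Set.Ioo (0:ℝ) 1,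
    ENNReal.ofReal (f ((s / ‖z‖) • z) * (s * w s)) /
      ENNReal.ofReal (hat1 w s + hat1 w ‖z‖)

/-- The Hörmander-type maximal function
`M_{ω₁,rad}(f)(z) = sup_{0 ≤ b < |z|} (1/ω̂₁(b)) ∫_b^1 |f(s z/|z|)| s ω(s) ds`. -/
def MradE (w : ℝ → ℝ) (f : ℂ → ℝ) (z : ℂ) : ℝ≥0∞ :=
  ⨆ b ∈ Set.Ico (0:ℝ) ‖z‖,
    (∫⁻ s in Set.Ioo b 1, ENNReal.ofReal (|f ((s / ‖z‖) • z)| * (s * w s))) /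
      ENNReal.ofReal (hat1 w b)

/-!
In polar coordinates every operator acts along rays, where `S` becomes the Stieltjes-type operator
`g ↦ ∫ g(s) / (ω(Ici s) + ω(Ici r)) dω(s)` of the measure `dω = s w(s) ds`, considered on `L^p` of
`dμ = s v(s) ds`; let `dν = s σ(s) ds`, and write `ω = φ μ`.

Splitting the integral at `s = r` and testing against `k` turns the bound for `S` into bounds for
two Hardy averages, `h ↦ ∫_{Ici r} h dν / ω(Ici r)` from `L^p(ν)` to `L^p(μ)` and the same with `μ`
and `ν` (and the conjugate exponents) exchanged. By the `A_p` condition, the `(p-1)`-st power of the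
first is at most `A ^ p` times the average over `(Ici r, μ)` of `φ (M_ν h) ^ (p-1)`, where `M_ν` is
the maximal function over tails. Such maximal functions are bounded on `L^p` with a constant not
depending on the measure: their superlevel sets are themselves tails, which gives the weak type
estimate without any covering lemma.

Pointwise, `M f ≤ H|f| + H*|f|` and `H f + H* f ≤ 2 S f`, so it remains to recover `A_p` from `M`.
On `|z| > r`, `M f` is at least the average of `f` over the tail at `r`; applied to radial `f`, this
bounds a linear functional on a weighted `L^p` space, and the converse of Hölder's inequality turns
the bound into one for `σ̂₁(r)`.
-/

section Truncation

variable {α : Type*} [MeasurableSpace α] {μ : Measure α} {f : α → ℝ≥0∞} {p : ℝ}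

lemma lintegral_rpow_eq_iSup_min (hp : 0 < p) (hf : Measurable f) :
    ∫⁻ x, f x ^ p ∂μ = ⨆ n : ℕ, ∫⁻ x, min (f x) n ^ p ∂μ := by
  have hmono : Monotone fun (n : ℕ) x => min (f x) n ^ p := fun m n hmn x =>
    ENNReal.rpow_le_rpow (min_le_min_left _ (by exact_mod_cast hmn)) hp.le
  rw [← lintegral_iSup (fun n => by fun_prop) hmono]
  refine lintegral_congr fun x => ?_
  have := (ENNReal.orderIsoRpow p hp).map_iSup (fun n : ℕ => min (f x) n)
  simp only [ENNReal.orderIsoRpow_apply] at this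
  rw [← this, ← inf_iSup_eq, ENNReal.iSup_natCast, inf_top_eq]

lemma lintegral_rpow_eq_lintegral_meas_ofReal_lt_of_ae_ne_top (hp : 0 < p) (hf : Measurable f)
    (hft : ∀ᵐ x ∂μ, f x ≠ ⊤) :
    ∫⁻ x, f x ^ p ∂μ = ENNReal.ofReal p *
      ∫⁻ t in Ioi (0 : ℝ), μ {x | ENNReal.ofReal t < f x} * ENNReal.ofReal (t ^ (p - 1)) := by
  have hreal := lintegral_rpow_eq_lintegral_meas_lt_mul μ
    (Filter.Eventually.of_forall fun x => (f x).toReal_nonneg) hf.ennreal_toReal.aemeasurable hp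
  convert hreal using 1
  · refine lintegral_congr_ae (hft.mono fun x hx => ?_)
    simp only [← ENNReal.ofReal_rpow_of_nonneg ENNReal.toReal_nonneg hp.le,
      ENNReal.ofReal_toReal hx]
  · congr 1
    refine setLIntegral_congr_fun measurableSet_Ioi fun t ht => ?_
    congr 1
    exact measure_congr (hft.mono fun x hx => propext
      (ENNReal.ofReal_lt_iff_lt_toReal (le_of_lt ht) hx))

lemma lintegral_rpow_le_lintegral_meas_ofReal_lt (hp : 0 < p) (hf : Measurable f) :
    ∫⁻ x, f x ^ p ∂μ ≤ ENNReal.ofReal p *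
      ∫⁻ t in Ioi (0 : ℝ), μ {x | ENNReal.ofReal t < f x} * ENNReal.ofReal (t ^ (p - 1)) := by
  rw [lintegral_rpow_eq_iSup_min hp hf]
  refine iSup_le fun n => ?_
  rw [lintegral_rpow_eq_lintegral_meas_ofReal_lt_of_ae_ne_top hp (by fun_prop)
    (Filter.Eventually.of_forall fun x => ((min_le_right _ _).trans_lt (by simp)).ne)]
  gcongr
  exact min_le_left _ _

lemma rpow_eq_self_mul_rpow_sub_one (hp : 1 ≤ p) (x : ℝ≥0∞) : x ^ p = x * x ^ (p - 1) := by
  conv_lhs => rw [← add_sub_cancel 1 p, ENNReal.rpow_add_of_nonneg 1 (p - 1) zero_le_one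
    (sub_nonneg.2 hp), ENNReal.rpow_one]

lemma le_rpow_of_le_mul_rpow_one_div {q : ℝ} (hpq : p.HolderConjugate q) {x K : ℝ≥0∞}
    (hx : x ≠ ⊤) (h : x ≤ K * x ^ (1 / q)) : x ≤ K ^ p := by
  obtain rfl | hx0 := eq_or_ne x 0
  · exact bot_le
  have hsplit : x ^ (1 / p) * x ^ (1 / q) = x := by
    rw [← ENNReal.rpow_add _ _ hx0 hx, one_div, one_div, hpq.inv_add_inv_eq_one, ENNReal.rpow_one]
  have hle : x ^ (1 / p) ≤ K :=
    (ENNReal.mul_le_mul_iff_left (c := x ^ (1 / q)) (by simp [hx0, hx]) (by simp [hx0, hx])).1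
      (hsplit.trans_le h)
  calc x = (x ^ (1 / p)) ^ p := by rw [one_div, ENNReal.rpow_inv_rpow hpq.ne_zero]
    _ ≤ K ^ p := ENNReal.rpow_le_rpow hle hpq.nonneg

lemma lintegral_rpow_le_of_forall_lintegral_mul_le [IsFiniteMeasure μ] {q : ℝ}
    (hpq : p.HolderConjugate q) (hf : Measurable f) {K : ℝ≥0∞}
    (h : ∀ g : α → ℝ≥0, Measurable g →
      ∫⁻ x, f x * g x ∂μ ≤ K * (∫⁻ x, (g x : ℝ≥0∞) ^ q ∂μ) ^ (1 / q)) :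
    ∫⁻ x, f x ^ p ∂μ ≤ K ^ p := by
  have hp := hpq.pos
  rw [lintegral_rpow_eq_iSup_min hp hf]
  refine iSup_le fun n => ?_
  set I := ∫⁻ x, min (f x) n ^ p ∂μ
  have hIt : I ≠ ⊤ := by
    refine (lintegral_mono fun x => ?_).trans_lt
      (show ∫⁻ _, (n : ℝ≥0∞) ^ p ∂μ < ⊤ by
        rw [lintegral_const]
        exact ENNReal.mul_lt_top (ENNReal.rpow_lt_top_of_nonneg hp.le (by simp))
          (measure_lt_top _ _)) |>.ne
    exact ENNReal.rpow_le_rpow (min_le_right _ _) hp.le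
  have hn : ∀ x, min (f x) n ^ (p - 1) ≠ ⊤ := fun x =>
    ENNReal.rpow_ne_top_of_nonneg hpq.sub_one_pos.le ((min_le_right _ _).trans_lt (by simp)).ne
  have htest : I ≤ K * I ^ (1 / q) := by
    have := h (fun x => (min (f x) n ^ (p - 1)).toNNReal) (by fun_prop)
    simp only [ENNReal.coe_toNNReal (hn _), ← ENNReal.rpow_mul, hpq.sub_one_mul_conj] at this
    refine (lintegral_mono fun x => ?_).trans this
    calc min (f x) n ^ p = min (f x) n * min (f x) n ^ (p - 1) :=
          rpow_eq_self_mul_rpow_sub_one hpq.lt.le _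
      _ ≤ f x * min (f x) n ^ (p - 1) := by gcongr; exact min_le_left _ _
  exact le_rpow_of_le_mul_rpow_one_div hpq hIt htest

end Truncation

section Tail

variable {α : Type*} [LinearOrder α] [MeasurableSpace α] {μ : Measure α}
  {f : α → ℝ≥0∞} {p : ℝ}

/-- The maximal function of `f` over the tails `Ici b` containing the given point. -/
def tailMaximal (μ : Measure α) (f : α → ℝ≥0∞) (x : α) : ℝ≥0∞ :=
  ⨆ b ≤ x, ⨍⁻ y in Ici b, f y ∂μ

lemma laverage_Ici_le_tailMaximal (μ : Measure α) (f : α → ℝ≥0∞) {b x : α} (hbx : b ≤ x) :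
    ⨍⁻ y in Ici b, f y ∂μ ≤ tailMaximal μ f x :=
  le_iSup₂ (f := fun b _ => ⨍⁻ y in Ici b, f y ∂μ) b hbx

lemma tailMaximal_mono (μ : Measure α) (f : α → ℝ≥0∞) : Monotone (tailMaximal μ f) :=
  fun _ _ hxy => iSup₂_le fun _ hb => laverage_Ici_le_tailMaximal μ f (hb.trans hxy)

lemma isUpperSet_lt_tailMaximal (μ : Measure α) (f : α → ℝ≥0∞) (l : ℝ≥0∞) :
    IsUpperSet {x | l < tailMaximal μ f x} :=
  fun _ _ hxy hx => lt_of_lt_of_le hx (tailMaximal_mono μ f hxy)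

lemma tailMaximal_le_add_tailMaximal_indicator (μ : Measure α) (f : α → ℝ≥0∞) (l : ℝ≥0∞) (x : α) :
    tailMaximal μ f x ≤ l + tailMaximal μ ({y | l < f y}.indicator f) x := by
  refine iSup₂_le fun b hb => ?_
  calc ⨍⁻ y in Ici b, f y ∂μ
      ≤ ⨍⁻ y in Ici b, (l + {y | l < f y}.indicator f y) ∂μ := by
        refine lintegral_mono fun y => ?_
        by_cases hy : l < f y
        · simp [indicator_of_mem (show y ∈ {y | l < f y} from hy)]
        · exact le_add_right (not_lt.1 hy)
    _ = ⨍⁻ _ in Ici b, l ∂μ + ⨍⁻ y in Ici b, {y | l < f y}.indicator f y ∂μ :=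
        lintegral_add_left measurable_const _
    _ ≤ l + tailMaximal μ ({y | l < f y}.indicator f) x := by
        refine add_le_add ?_ (laverage_Ici_le_tailMaximal _ _ hb)
        rw [setLAverage_eq, setLIntegral_const]
        exact (mul_div_assoc l _ _).trans_le (mul_le_of_le_one_right' ENNReal.div_self_le_one)

variable [TopologicalSpace α] [OrderTopology α] [BorelSpace α] [IsFiniteMeasure μ]
  [μ.InnerRegularCompactLTTop]

lemma measure_eq_iSup_Ici_of_isUpperSet {U : Set α} (hU : IsUpperSet U) :
    μ U = ⨆ x ∈ U, μ (Ici x) := by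
  refine le_antisymm ?_ (iSup₂_le fun x hx => measure_mono fun y hy => hU hy hx)
  rw [hU.ordConnected.measurableSet.measure_eq_iSup_isCompact_of_ne_top (measure_ne_top μ U)]
  refine iSup₂_le fun K hKU => iSup_le fun hK => ?_
  obtain rfl | hne := K.eq_empty_or_nonempty
  · simp
  · obtain ⟨x, hxK, hx⟩ := hK.exists_isLeast hne
    exact (measure_mono hx).trans (le_iSup₂ (f := fun x _ => μ (Ici x)) x (hKU hxK))

lemma ae_measure_Ici_ne_zero : ∀ᵐ x ∂μ, μ (Ici x) ≠ 0 := by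
  have hU : IsUpperSet {x | μ (Ici x) = 0} := fun x y hxy hx =>
    measure_mono_null (Ici_subset_Ici.2 hxy) hx
  simpa [ae_iff] using (measure_eq_iSup_Ici_of_isUpperSet (μ := μ) hU).trans_le
    (iSup₂_le fun x hx => le_of_eq hx)

lemma mul_measure_lt_tailMaximal_le (f : α → ℝ≥0∞) (l : ℝ≥0∞) :
    l * μ {x | l < tailMaximal μ f x} ≤ ∫⁻ x, f x ∂μ := by
  simp only [measure_eq_iSup_Ici_of_isUpperSet (isUpperSet_lt_tailMaximal μ f l),
    ENNReal.mul_iSup]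
  refine iSup₂_le fun x hx => ?_
  simp only [mem_ofPred_eq, tailMaximal, lt_iSup_iff, setLAverage_eq] at hx
  obtain ⟨b, hbx, hl⟩ := hx
  calc l * μ (Ici x) ≤ l * μ (Ici b) := by gcongr
    _ ≤ ∫⁻ y in Ici b, f y ∂μ := ENNReal.mul_le_of_le_div hl.le
    _ ≤ ∫⁻ y, f y ∂μ := setLIntegral_le_lintegral _ _

lemma mul_measure_lt_tailMaximal_div_two_le (hf : Measurable f) (l : ℝ≥0∞) :
    l * μ {x | l < tailMaximal μ f x / 2} ≤ μ.withDensity f {x | l < f x} := by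
  have hset : MeasurableSet {x | l < f x} := measurableSet_lt measurable_const hf
  rw [withDensity_apply _ hset, ← lintegral_indicator hset]
  refine le_trans ?_ (mul_measure_lt_tailMaximal_le _ l)
  refine mul_le_mul_right (measure_mono fun x hx => ?_) l
  rw [mem_ofPred_eq, ENNReal.lt_div_iff_mul_lt (Or.inl two_ne_zero) (Or.inl ENNReal.ofNat_ne_top),
    mul_two] at hx
  exact lt_of_add_lt_add_left (hx.trans_le (tailMaximal_le_add_tailMaximal_indicator μ f l x))

lemma measurable_tailMaximal (μ : Measure α) (f : α → ℝ≥0∞) : Measurable (tailMaximal μ f) :=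
  measurable_of_Ioi fun l => (isUpperSet_lt_tailMaximal μ f l).ordConnected.measurableSet

lemma lintegral_tailMaximal_div_two_rpow_le (hp : 0 < p) (hp1 : p ≠ 1) (hf : Measurable f) :
    ∫⁻ x, (tailMaximal μ f x / 2) ^ p ∂μ ≤ ENNReal.ofReal p * ∫⁻ t in Ioi (0 : ℝ),
      μ.withDensity f {x | ENNReal.ofReal t < f x} * ENNReal.ofReal (t ^ (p - 1 - 1)) := by
  have hM := measurable_tailMaximal μ f
  refine (lintegral_rpow_le_lintegral_meas_ofReal_lt hp (by fun_prop)).trans ?_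
  gcongr 1
  refine setLIntegral_mono' measurableSet_Ioi fun t (ht : 0 < t) => ?_
  have hpow : t ^ (p - 1) = t * t ^ (p - 1 - 1) := by
    rw [← Real.rpow_one_add' ht.le (by simpa using sub_ne_zero.2 hp1), add_sub_cancel]
  rw [hpow, ENNReal.ofReal_mul ht.le, ← mul_assoc, mul_comm (μ _)]
  exact mul_le_mul_left (mul_measure_lt_tailMaximal_div_two_le hf _) _

lemma lintegral_tailMaximal_rpow_le (hp : 1 < p) (hf : Measurable f) :
    ∫⁻ x, tailMaximal μ f x ^ p ∂μ ≤ ENNReal.ofReal (2 ^ p * p / (p - 1)) * ∫⁻ x, f x ^ p ∂μ := by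
  have hp0 : 0 < p := zero_lt_one.trans hp
  have hp1 : 0 < p - 1 := sub_pos.2 hp
  obtain hft | hft := eq_or_ne (∫⁻ x, f x ^ p ∂μ) ⊤
  · rw [hft, ENNReal.mul_top (by simpa using by positivity)]
    exact le_top
  have hf_ne_top : ∀ᵐ x ∂μ, f x ≠ ⊤ := (ae_lt_top (by fun_prop) hft).mono fun x hx h => by
    simp [h, ENNReal.top_rpow_of_pos hp0] at hx
  have h_half : ∀ x, tailMaximal μ f x ^ p = 2 ^ p * (tailMaximal μ f x / 2) ^ p := fun x => by
    rw [← ENNReal.mul_rpow_of_nonneg _ _ hp0.le, ENNReal.mul_div_cancel (by simp) (by simp)]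
  have hM := measurable_tailMaximal μ f
  calc ∫⁻ x, tailMaximal μ f x ^ p ∂μ
      = 2 ^ p * ∫⁻ x, (tailMaximal μ f x / 2) ^ p ∂μ := by
        simp only [h_half]
        exact lintegral_const_mul _ (by fun_prop)
    _ ≤ 2 ^ p * (ENNReal.ofReal p * ∫⁻ t in Ioi (0 : ℝ),
          μ.withDensity f {x | ENNReal.ofReal t < f x} * ENNReal.ofReal (t ^ (p - 1 - 1))) := by
        gcongr
        exact lintegral_tailMaximal_div_two_rpow_le hp0 hp.ne' hf
    _ = 2 ^ p * (ENNReal.ofReal p / ENNReal.ofReal (p - 1) *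
          ∫⁻ x, f x ^ (p - 1) ∂μ.withDensity f) := by
        rw [lintegral_rpow_eq_lintegral_meas_ofReal_lt_of_ae_ne_top hp1 hf
            (withDensity_absolutelyContinuous μ f hf_ne_top), ← mul_assoc (_ / _),
          ENNReal.div_mul_cancel (by simpa using hp) (by simp)]
    _ = ENNReal.ofReal (2 ^ p * p / (p - 1)) * ∫⁻ x, f x ^ p ∂μ := by
        rw [lintegral_withDensity_eq_lintegral_mul _ hf (by fun_prop), ← mul_assoc,
          ← mul_div_assoc]
        congr 1
        · rw [ENNReal.ofReal_div_of_pos hp1, ENNReal.ofReal_mul (by positivity),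
            ← ENNReal.ofReal_rpow_of_pos two_pos, ENNReal.ofReal_ofNat]
        · exact lintegral_congr fun x => (rpow_eq_self_mul_rpow_sub_one hp.le _).symm

end Tail

section Stieltjes

variable {α : Type*} [LinearOrder α] [MeasurableSpace α]

lemma antitone_measure_Ici (ω : Measure α) : Antitone fun r => ω (Ici r) :=
  fun _ _ hrs => measure_mono (Ici_subset_Ici.2 hrs)

variable [TopologicalSpace α] [OrderTopology α] [BorelSpace α] [SecondCountableTopology α]
  {μ ν ω : Measure α} [SFinite μ] [SFinite ν] {h k : α → ℝ≥0∞}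

lemma lintegral_setLIntegral_Iic_mul (hh : Measurable h) (hk : Measurable k) :
    ∫⁻ r, (∫⁻ s in Iic r, h s ∂ν) * k r ∂μ = ∫⁻ s, (∫⁻ r in Ici s, k r ∂μ) * h s ∂ν := by
  have hmeas : Measurable fun x : α × α => ({x | x.2 ≤ x.1} : Set (α × α)).indicator
      (fun x => h x.2 * k x.1) x :=
    Measurable.indicator (by fun_prop) (measurableSet_le measurable_snd measurable_fst)
  calc ∫⁻ r, (∫⁻ s in Iic r, h s ∂ν) * k r ∂μ
      = ∫⁻ r, ∫⁻ s, ({x | x.2 ≤ x.1} : Set (α × α)).indicator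
          (fun x => h x.2 * k x.1) (r, s) ∂ν ∂μ := by
        refine lintegral_congr fun r => ?_
        rw [← lintegral_mul_const _ hh, ← lintegral_indicator measurableSet_Iic]
        rfl
    _ = ∫⁻ s, ∫⁻ r, ({x | x.2 ≤ x.1} : Set (α × α)).indicator
          (fun x => h x.2 * k x.1) (r, s) ∂μ ∂ν := lintegral_lintegral_swap hmeas.aemeasurable
    _ = ∫⁻ s, (∫⁻ r in Ici s, k r ∂μ) * h s ∂ν := by
        refine lintegral_congr fun s => ?_
        rw [← lintegral_mul_const _ hk, ← lintegral_indicator measurableSet_Ici]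
        simp only [mul_comm (k _)]
        rfl

lemma lintegral_stieltjes_mul_le (hh : Measurable h) (hk : Measurable k) :
    ∫⁻ r, (∫⁻ s, h s / (ω (Ici s) + ω (Ici r)) ∂ν) * k r ∂μ ≤
      ∫⁻ r, (∫⁻ s in Ici r, h s ∂ν) / ω (Ici r) * k r ∂μ +
        ∫⁻ s, (∫⁻ r in Ici s, k r ∂μ) / ω (Ici s) * h s ∂ν := by
  have hω : Measurable fun r => ω (Ici r) := (antitone_measure_Ici ω).measurable
  have hsplit : ∀ r, ∫⁻ s, h s / (ω (Ici s) + ω (Ici r)) ∂ν ≤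
      (∫⁻ s in Ici r, h s ∂ν) / ω (Ici r) + ∫⁻ s in Iic r, h s / ω (Ici s) ∂ν := fun r =>
    calc ∫⁻ s, h s / (ω (Ici s) + ω (Ici r)) ∂ν
        ≤ ∫⁻ s in Ici r, h s / (ω (Ici s) + ω (Ici r)) ∂ν +
            ∫⁻ s in Iic r, h s / (ω (Ici s) + ω (Ici r)) ∂ν := by
          rw [← setLIntegral_univ, ← Ici_union_Iic]
          exact lintegral_union_le _ _ _
      _ ≤ ∫⁻ s in Ici r, h s * (ω (Ici r))⁻¹ ∂ν + ∫⁻ s in Iic r, h s / ω (Ici s) ∂ν := by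
          simp only [div_eq_mul_inv]
          gcongr
          exacts [le_add_self, le_self_add]
      _ = _ := by rw [lintegral_mul_const _ hh, div_eq_mul_inv]
  calc ∫⁻ r, (∫⁻ s, h s / (ω (Ici s) + ω (Ici r)) ∂ν) * k r ∂μ
      ≤ ∫⁻ r, ((∫⁻ s in Ici r, h s ∂ν) / ω (Ici r) * k r +
          (∫⁻ s in Iic r, h s / ω (Ici s) ∂ν) * k r) ∂μ := by
        gcongr with r
        rw [← add_mul]
        gcongr
        exact hsplit r
    _ = ∫⁻ r, (∫⁻ s in Ici r, h s ∂ν) / ω (Ici r) * k r ∂μ +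
          ∫⁻ r, (∫⁻ s in Iic r, h s / ω (Ici s) ∂ν) * k r ∂μ := by
        refine lintegral_add_left (Measurable.mul (Measurable.div ?_ hω) hk) _
        exact Antitone.measurable fun _ _ hrs => lintegral_mono_set (Ici_subset_Ici.2 hrs)
    _ = _ := by
        simp only [lintegral_setLIntegral_Iic_mul (h := fun s => h s / ω (Ici s)) (hh.div hω) hk,
          ENNReal.mul_comm_div]

end Stieltjes

section Hardy

variable {α : Type*} [LinearOrder α] [MeasurableSpace α]

/-- A Muckenhoupt-type condition relating three measures on the tails `Ici r`, for conjugate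
exponents `p` and `q`. When all three have densities, `ω` being given by the geometric mean of those
of `μ` and `ν` with exponents `1 / p` and `1 / q`, it says that Hölder's inequality
`ω(Ici r) ≤ μ(Ici r) ^ (1 / p) * ν(Ici r) ^ (1 / q)` can be reversed up to the constant `A`. The
geometric mean is encoded by the density `φ` of `ω` with respect to `μ`, so that no reference
measure is needed, and only the inequality `φ ^ q μ ≤ ν` is required. -/
structure IsTailMuckenhoupt (p q : ℝ) (μ ν ω : Measure α) (A : ℝ≥0) : Prop where
  exists_density : ∃ φ : α → ℝ≥0∞, Measurable φ ∧ ω = μ.withDensity φ ∧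
    μ.withDensity (fun x => φ x ^ q) ≤ ν
  tail_le : ∀ᵐ r ∂μ, μ (Ici r) ^ (1 / p) * ν (Ici r) ^ (1 / q) ≤ A * ω (Ici r)

variable {p q : ℝ} {μ ν ω : Measure α} {A : ℝ≥0} {h : α → ℝ≥0∞}

lemma div_rpow_le_mul_div (hpq : p.HolderConjugate q) {A M N W : ℝ≥0∞}
    (hM : M ≠ 0) (hMt : M ≠ ⊤) (hW : W ≠ ⊤)
    (hMN : M ^ (1 / p) * N ^ (1 / q) ≤ A * W) :
    (N / W) ^ (p - 1) ≤ A ^ p * W / M := by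
  have hp1 := hpq.sub_one_pos
  obtain rfl | hW0 := eq_or_ne W 0
  · have hN : N = 0 := by simpa [hM, hpq.nonneg, hpq.symm.pos, hpq.symm.nonneg.not_gt,
      hpq.nonneg.not_gt] using hMN
    simp [hN, hp1]
  have hWp : W ^ (p - 1) ≠ 0 := by simp [hW0, hW]
  have hWpt : W ^ (p - 1) ≠ ⊤ := by simp [hW0, hW]
  rw [ENNReal.le_div_iff_mul_le (Or.inl hM) (Or.inl hMt),
    ENNReal.div_rpow_of_nonneg _ _ hp1.le, ENNReal.mul_comm_div, ← mul_div_assoc,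
    ENNReal.div_le_iff hWp hWpt]
  calc N ^ (p - 1) * M = (M ^ (1 / p) * N ^ (1 / q)) ^ p := by
        rw [ENNReal.mul_rpow_of_nonneg _ _ hpq.nonneg, ← ENNReal.rpow_mul, ← ENNReal.rpow_mul,
          one_div_mul_cancel hpq.ne_zero, ENNReal.rpow_one, mul_comm, one_div_mul_eq_div,
          hpq.div_conj_eq_sub_one]
    _ ≤ (A * W) ^ p := ENNReal.rpow_le_rpow hMN hpq.nonneg
    _ = A ^ p * W * W ^ (p - 1) := by
        rw [ENNReal.mul_rpow_of_nonneg _ _ hpq.nonneg, rpow_eq_self_mul_rpow_sub_one hpq.lt.le W,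
          mul_assoc]

variable [TopologicalSpace α] [OrderTopology α] [BorelSpace α]
  [IsFiniteMeasure μ] [IsFiniteMeasure ν]

/-- On the tail `Ici r` every value of `tailMaximal ν h` exceeds the average of `h` over that tail,
so the average may be moved inside an integral with respect to the third measure. -/
lemma lintegral_div_rpow_le_tailMaximal (hpq : p.HolderConjugate q) {φ : α → ℝ≥0∞}
    (hφ : Measurable φ) {r : α} (hμr : μ (Ici r) ≠ 0)
    (hφr : μ.withDensity φ (Ici r) ≠ ⊤)
    (htail : μ (Ici r) ^ (1 / p) * ν (Ici r) ^ (1 / q) ≤ A * μ.withDensity φ (Ici r)) :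
    ((∫⁻ s in Ici r, h s ∂ν) / μ.withDensity φ (Ici r)) ^ (p - 1) ≤
      A ^ p * tailMaximal μ (fun s => φ s * tailMaximal ν h s ^ (p - 1)) r := by
  obtain hν0 | hν0 := eq_or_ne (ν (Ici r)) 0
  · simp [Measure.restrict_eq_zero.2 hν0, hpq.sub_one_pos]
  set X := ∫⁻ s in Ici r, h s ∂ν
  set N := ν (Ici r)
  set M := μ (Ici r)
  set W := μ.withDensity φ (Ici r) with hW
  have hp1 := hpq.sub_one_pos.le
  have hbalance : (N / W) ^ (p - 1) ≤ A ^ p * W / M :=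
    div_rpow_le_mul_div hpq hμr (measure_ne_top μ _) hφr htail
  calc (X / W) ^ (p - 1) = (X / N) ^ (p - 1) * (N / W) ^ (p - 1) := by
        rw [← ENNReal.mul_rpow_of_nonneg _ _ hp1, ← mul_div_assoc,
          ENNReal.div_mul_cancel hν0 (measure_ne_top ν _)]
    _ ≤ (X / N) ^ (p - 1) * (A ^ p * W / M) := by gcongr
    _ = A ^ p * ((∫⁻ s in Ici r, φ s * (X / N) ^ (p - 1) ∂μ) / M) := by
        rw [lintegral_mul_const _ hφ, hW, withDensity_apply _ measurableSet_Ici,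
          mul_comm (∫⁻ s in Ici r, φ s ∂μ), mul_div_assoc, mul_div_assoc, mul_left_comm]
    _ ≤ A ^ p * ((∫⁻ s in Ici r, φ s * tailMaximal ν h s ^ (p - 1) ∂μ) / M) := by
        refine mul_le_mul_right (ENNReal.div_le_div_right ?_ _) _
        refine setLIntegral_mono' measurableSet_Ici fun s hs => ?_
        gcongr
        rw [← setLAverage_eq]
        exact laverage_Ici_le_tailMaximal ν h hs
    _ ≤ _ := by
        gcongr
        rw [← setLAverage_eq]
        exact laverage_Ici_le_tailMaximal μ _ le_rfl

variable [μ.InnerRegularCompactLTTop] [ν.InnerRegularCompactLTTop] [IsFiniteMeasure ω]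

theorem IsTailMuckenhoupt.lintegral_div_rpow_le (hμ : IsTailMuckenhoupt p q μ ν ω A)
    (hpq : p.HolderConjugate q) (hh : Measurable h) :
    ∫⁻ r, ((∫⁻ s in Ici r, h s ∂ν) / ω (Ici r)) ^ p ∂μ ≤
      (A ^ p) ^ q * ENNReal.ofReal (2 ^ q * q / (q - 1)) * ENNReal.ofReal (2 ^ p * p / (p - 1)) *
        ∫⁻ s, h s ^ p ∂ν := by
  obtain ⟨⟨φ, hφ, rfl, hφν⟩, htail⟩ := hμ
  have hM := measurable_tailMaximal ν h
  have hpow : ∀ x : ℝ≥0∞, (x ^ (p - 1)) ^ q = x ^ p := fun x => by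
    rw [← ENNReal.rpow_mul, hpq.sub_one_mul_conj]
  calc ∫⁻ r, ((∫⁻ s in Ici r, h s ∂ν) / μ.withDensity φ (Ici r)) ^ p ∂μ
      ≤ ∫⁻ r, (A ^ p) ^ q *
          tailMaximal μ (fun s => φ s * tailMaximal ν h s ^ (p - 1)) r ^ q ∂μ := by
        refine lintegral_mono_ae ?_
        filter_upwards [ae_measure_Ici_ne_zero, htail] with r hr htr
        rw [← hpow, ← ENNReal.mul_rpow_of_nonneg _ _ hpq.symm.nonneg]
        exact ENNReal.rpow_le_rpow
          (lintegral_div_rpow_le_tailMaximal hpq hφ hr (measure_ne_top _ _) htr) hpq.symm.nonneg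
    _ = (A ^ p) ^ q *
          ∫⁻ r, tailMaximal μ (fun s => φ s * tailMaximal ν h s ^ (p - 1)) r ^ q ∂μ :=
        lintegral_const_mul _ ((measurable_tailMaximal _ _).pow_const q)
    _ ≤ (A ^ p) ^ q * (ENNReal.ofReal (2 ^ q * q / (q - 1)) *
          ∫⁻ s, (φ s * tailMaximal ν h s ^ (p - 1)) ^ q ∂μ) := by
        gcongr
        exact lintegral_tailMaximal_rpow_le hpq.symm.lt (by fun_prop)
    _ = (A ^ p) ^ q * (ENNReal.ofReal (2 ^ q * q / (q - 1)) *
          ∫⁻ s, tailMaximal ν h s ^ p ∂μ.withDensity fun s => φ s ^ q) := by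
        rw [lintegral_withDensity_eq_lintegral_mul _ (by fun_prop) (by fun_prop)]
        simp only [Pi.mul_apply, ENNReal.mul_rpow_of_nonneg _ _ hpq.symm.nonneg, hpow]
    _ ≤ (A ^ p) ^ q * (ENNReal.ofReal (2 ^ q * q / (q - 1)) *
          (ENNReal.ofReal (2 ^ p * p / (p - 1)) * ∫⁻ s, h s ^ p ∂ν)) := by
        gcongr
        exact (lintegral_mono' hφν le_rfl).trans (lintegral_tailMaximal_rpow_le hpq.lt hh)
    _ = _ := by ring

theorem IsTailMuckenhoupt.exists_lintegral_div_rpow_le (hμ : IsTailMuckenhoupt p q μ ν ω A)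
    (hpq : p.HolderConjugate q) :
    ∃ C : ℝ≥0, ∀ h : α → ℝ≥0∞, Measurable h →
      (∫⁻ r, ((∫⁻ s in Ici r, h s ∂ν) / ω (Ici r)) ^ p ∂μ) ^ (1 / p) ≤
        C * (∫⁻ s, h s ^ p ∂ν) ^ (1 / p) := by
  have hp := hpq.nonneg
  have hq := hpq.symm.nonneg
  set K : ℝ≥0∞ := (A ^ p) ^ q * ENNReal.ofReal (2 ^ q * q / (q - 1)) *
    ENNReal.ofReal (2 ^ p * p / (p - 1))
  have hK : K ^ (1 / p) ≠ ⊤ := by finiteness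
  refine ⟨(K ^ (1 / p)).toNNReal, fun h hh => ?_⟩
  rw [ENNReal.coe_toNNReal hK, ← ENNReal.mul_rpow_of_nonneg _ _ hpq.one_div_nonneg]
  exact ENNReal.rpow_le_rpow (hμ.lintegral_div_rpow_le hpq hh) hpq.one_div_nonneg

variable [SecondCountableTopology α]

lemma IsTailMuckenhoupt.exists_lintegral_stieltjes_mul_le (hμ : IsTailMuckenhoupt p q μ ν ω A)
    (hν : IsTailMuckenhoupt q p ν μ ω A) (hpq : p.HolderConjugate q) :
    ∃ C : ℝ≥0, ∀ h k : α → ℝ≥0∞, Measurable h → Measurable k →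
      ∫⁻ r, (∫⁻ s, h s / (ω (Ici s) + ω (Ici r)) ∂ν) * k r ∂μ ≤
        C * (∫⁻ s, h s ^ p ∂ν) ^ (1 / p) * (∫⁻ r, k r ^ q ∂μ) ^ (1 / q) := by
  obtain ⟨C₁, hC₁⟩ := hμ.exists_lintegral_div_rpow_le hpq
  obtain ⟨C₂, hC₂⟩ := hν.exists_lintegral_div_rpow_le hpq.symm
  have hmeas : ∀ (m : Measure α) (u : α → ℝ≥0∞),
      Measurable fun r => (∫⁻ s in Ici r, u s ∂m) / ω (Ici r) := fun m u =>
    Measurable.div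
      (Antitone.measurable fun _ _ hrs => lintegral_mono_set (Ici_subset_Ici.2 hrs))
      (antitone_measure_Ici ω).measurable
  refine ⟨C₁ + C₂, fun h k hh hk => (lintegral_stieltjes_mul_le hh hk).trans ?_⟩
  calc ∫⁻ r, (∫⁻ s in Ici r, h s ∂ν) / ω (Ici r) * k r ∂μ +
        ∫⁻ s, (∫⁻ r in Ici s, k r ∂μ) / ω (Ici s) * h s ∂ν
      ≤ (∫⁻ r, ((∫⁻ s in Ici r, h s ∂ν) / ω (Ici r)) ^ p ∂μ) ^ (1 / p) *
            (∫⁻ r, k r ^ q ∂μ) ^ (1 / q) +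
          (∫⁻ s, ((∫⁻ r in Ici s, k r ∂μ) / ω (Ici s)) ^ q ∂ν) ^ (1 / q) *
            (∫⁻ s, h s ^ p ∂ν) ^ (1 / p) :=
        add_le_add
          (ENNReal.lintegral_mul_le_Lp_mul_Lq μ hpq (hmeas ν h).aemeasurable hk.aemeasurable)
          (ENNReal.lintegral_mul_le_Lp_mul_Lq ν hpq.symm (hmeas μ k).aemeasurable hh.aemeasurable)
    _ ≤ C₁ * (∫⁻ s, h s ^ p ∂ν) ^ (1 / p) * (∫⁻ r, k r ^ q ∂μ) ^ (1 / q) +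
          C₂ * (∫⁻ r, k r ^ q ∂μ) ^ (1 / q) * (∫⁻ s, h s ^ p ∂ν) ^ (1 / p) := by
        gcongr
        exacts [hC₁ h hh, hC₂ k hk]
    _ = _ := by push_cast; ring

theorem IsTailMuckenhoupt.exists_lintegral_stieltjes_rpow_le (hμ : IsTailMuckenhoupt p q μ ν ω A)
    (hν : IsTailMuckenhoupt q p ν μ ω A) (hpq : p.HolderConjugate q) :
    ∃ C : ℝ≥0, ∀ g : α → ℝ≥0∞, Measurable g →
      ∫⁻ r, (∫⁻ s, g s / (ω (Ici s) + ω (Ici r)) ∂ω) ^ p ∂μ ≤ C * ∫⁻ r, g r ^ p ∂μ := by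
  obtain ⟨C, hC⟩ := hμ.exists_lintegral_stieltjes_mul_le hν hpq
  obtain ⟨ψ, hψ, rfl, hψμ⟩ := hν.exists_density
  set ω := ν.withDensity ψ
  have hω : Measurable fun r => ω (Ici r) := (antitone_measure_Ici ω).measurable
  refine ⟨C ^ p, fun g hg => ?_⟩
  have h_density : ∀ r, ∫⁻ s, g s / (ω (Ici s) + ω (Ici r)) ∂ω =
      ∫⁻ s, ψ s * g s / (ω (Ici s) + ω (Ici r)) ∂ν := fun r => by
    refine (lintegral_withDensity_eq_lintegral_mul ν hψ (hg.div (hω.add measurable_const))).trans ?_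
    simp only [Pi.mul_apply, Pi.div_apply, Pi.add_apply, mul_div_assoc]
  have h_mono : Monotone fun r => ∫⁻ s, ψ s * g s / (ω (Ici s) + ω (Ici r)) ∂ν :=
    fun r r' hr => lintegral_mono fun s => ENNReal.div_le_div_left
      (add_le_add_right (antitone_measure_Ici ω hr) _) _
  simp only [h_density]
  calc ∫⁻ r, (∫⁻ s, ψ s * g s / (ω (Ici s) + ω (Ici r)) ∂ν) ^ p ∂μ
      ≤ (C * (∫⁻ s, (ψ s * g s) ^ p ∂ν) ^ (1 / p)) ^ p :=
        lintegral_rpow_le_of_forall_lintegral_mul_le hpq h_mono.measurable fun k hk =>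
          hC _ _ (hψ.mul hg) hk.coe_nnreal_ennreal
    _ = C ^ p * ∫⁻ s, g s ^ p ∂ν.withDensity fun s => ψ s ^ p := by
        rw [ENNReal.mul_rpow_of_nonneg _ _ hpq.nonneg, one_div, ENNReal.rpow_inv_rpow hpq.ne_zero,
          lintegral_withDensity_eq_lintegral_mul _ (by fun_prop) (by fun_prop)]
        simp only [Pi.mul_apply, ENNReal.mul_rpow_of_nonneg _ _ hpq.nonneg]
    _ ≤ (C ^ p : ℝ≥0) * ∫⁻ s, g s ^ p ∂μ := by
        rw [ENNReal.coe_rpow_of_nonneg _ hpq.nonneg]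
        gcongr

end Hardy

section Densities

variable {α : Type*} [MeasurableSpace α] {m : Measure α} {a b c : α → ℝ≥0∞} {p q : ℝ}

lemma mul_rpow_mul_rpow_div (hpq : p.HolderConjugate q) (x y : ℝ≥0∞) (hx : x ≠ ⊤) :
    x * (x ^ (1 / p) * y ^ (1 / q) / x) = x ^ (1 / p) * y ^ (1 / q) := by
  obtain rfl | hx0 := eq_or_ne x 0
  · simp [hpq.pos]
  · exact ENNReal.mul_div_cancel hx0 hx

lemma mul_rpow_mul_rpow_div_rpow_le (hpq : p.HolderConjugate q) (x y : ℝ≥0∞) (hx : x ≠ ⊤) :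
    x * (x ^ (1 / p) * y ^ (1 / q) / x) ^ q ≤ y := by
  obtain rfl | hx0 := eq_or_ne x 0
  · simp
  have hsplit : x = (x ^ (1 / p)) * x ^ (1 / q) := by
    rw [← ENNReal.rpow_add _ _ hx0 hx, one_div, one_div, hpq.inv_add_inv_eq_one, ENNReal.rpow_one]
  have hroot : ∀ z : ℝ≥0∞, (z ^ (1 / q)) ^ q = z := fun z => by
    rw [one_div, ENNReal.rpow_inv_rpow hpq.symm.ne_zero]
  have hcancel : x ^ (1 / p) * y ^ (1 / q) / x = y ^ (1 / q) / x ^ (1 / q) := by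
    nth_rewrite 2 [hsplit]
    exact ENNReal.mul_div_mul_left _ _ (by simp [hx0, hx]) (by simp [hx0, hx])
  rw [hcancel, ENNReal.div_rpow_of_nonneg _ _ hpq.symm.nonneg, hroot, hroot,
    ENNReal.mul_div_cancel hx0 hx]

theorem IsTailMuckenhoupt.of_withDensity [LinearOrder α] (hpq : p.HolderConjugate q) {A : ℝ≥0}
    (ha : AEMeasurable a m) (hb : AEMeasurable b m) (ha_top : ∀ᵐ x ∂m, a x ≠ ⊤)
    (hc : ∀ᵐ x ∂m, c x = a x ^ (1 / p) * b x ^ (1 / q))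
    (htail : ∀ᵐ r ∂m, m.withDensity a (Ici r) ^ (1 / p) * m.withDensity b (Ici r) ^ (1 / q) ≤
      A * m.withDensity c (Ici r)) :
    IsTailMuckenhoupt p q (m.withDensity a) (m.withDensity b) (m.withDensity c) A where
  exists_density := by
    have hφ : Measurable fun x => ha.mk a x ^ (1 / p) * hb.mk b x ^ (1 / q) / ha.mk a x :=
      ((ha.measurable_mk.pow_const _).mul (hb.measurable_mk.pow_const _)).div ha.measurable_mk
    refine ⟨_, hφ, ?_, ?_⟩
    · rw [← withDensity_mul₀ ha hφ.aemeasurable]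
      refine withDensity_congr_ae ?_
      filter_upwards [ha.ae_eq_mk, hb.ae_eq_mk, ha_top, hc] with x hax hbx hx hcx
      rw [hcx, Pi.mul_apply, ← hax, ← hbx, mul_rpow_mul_rpow_div hpq _ _ hx]
    · rw [← withDensity_mul₀ ha (hφ.pow_const q).aemeasurable]
      refine withDensity_mono ?_
      filter_upwards [ha.ae_eq_mk, hb.ae_eq_mk, ha_top] with x hax hbx hx
      rw [Pi.mul_apply, ← hax, ← hbx]
      exact mul_rpow_mul_rpow_div_rpow_le hpq _ _ hx
  tail_le := (withDensity_absolutelyContinuous m a).ae_le htail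

lemma ae_eq_zero_of_forall_lintegral_mul_le (hp : 0 < p) (ha : Measurable a) (hc : Measurable c)
    {K : ℝ≥0∞}
    (h : ∀ g : α → ℝ≥0, Measurable g →
      ∫⁻ x, g x * c x ∂m ≤ K * (∫⁻ x, (g x : ℝ≥0∞) ^ p * a x ∂m) ^ (1 / p)) :
    ∀ᵐ x ∂m, a x = 0 → c x = 0 := by
  have hset : MeasurableSet {x | a x = 0} := ha (measurableSet_singleton 0)
  have hzero : ∀ x, (({x | a x = 0}.indicator (1 : α → ℝ≥0) x : ℝ≥0) : ℝ≥0∞) ^ p * a x = 0 :=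
    fun x => by by_cases hx : a x = 0 <;> simp [hx, hp]
  have htest := h _ (measurable_one.indicator hset)
  simp only [hzero, lintegral_zero, one_div, ENNReal.zero_rpow_of_pos (inv_pos.2 hp), mul_zero,
    nonpos_iff_eq_zero] at htest
  rw [lintegral_eq_zero_iff (by fun_prop (disch := assumption))] at htest
  filter_upwards [htest] with x hx ha0
  simpa [ha0] using hx

/-- The test functions are `u / a ^ (1 / p)`, which turns the weighted inequality into an
unweighted one, to which the converse of Hölder's inequality applies. -/
theorem lintegral_div_rpow_le_of_forall_lintegral_mul_le [IsFiniteMeasure m]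
    (hpq : p.HolderConjugate q) (ha : AEMeasurable a m) (hc : AEMeasurable c m)
    (ha_top : ∀ᵐ x ∂m, a x ≠ ⊤) {K : ℝ≥0∞}
    (h : ∀ g : α → ℝ≥0, Measurable g →
      ∫⁻ x, g x * c x ∂m ≤ K * (∫⁻ x, (g x : ℝ≥0∞) ^ p * a x ∂m) ^ (1 / p)) :
    ∫⁻ x, (c x / a x ^ (1 / p)) ^ q ∂m ≤ K ^ q := by
  wlog hmeas : Measurable a ∧ Measurable c generalizing a c
  · have hac := ha.ae_eq_mk.and hc.ae_eq_mk
    refine (lintegral_congr_ae (hac.mono fun x hx => ?_)).trans_le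
      (this ha.measurable_mk.aemeasurable hc.measurable_mk.aemeasurable
        (ha_top.congr (hac.mono fun x hx => by rw [hx.1])) (fun g hg => ?_)
        ⟨ha.measurable_mk, hc.measurable_mk⟩)
    · simp only [← hx.1, ← hx.2]
    · rw [← lintegral_congr_ae (hac.mono fun x hx => congrArg (_ * ·) hx.2),
        ← lintegral_congr_ae (hac.mono fun x hx => congrArg (_ * ·) hx.1)]
      exact h g hg
  obtain ⟨ha, hc⟩ := hmeas
  have hp := hpq.pos
  have hroot : ∀ x, (a x ^ (1 / p)) ^ p = a x := fun x => by
    rw [one_div, ENNReal.rpow_inv_rpow hpq.ne_zero]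
  have hac := ae_eq_zero_of_forall_lintegral_mul_le hp ha hc h
  refine lintegral_rpow_le_of_forall_lintegral_mul_le hpq.symm (by fun_prop) fun u hu => ?_
  refine le_trans (lintegral_mono_ae ?_)
    ((h (fun x => (u x / a x ^ (1 / p)).toNNReal) (by fun_prop)).trans ?_)
  · filter_upwards [hac, ha_top] with x hx hx_top
    obtain h0 | h0 := eq_or_ne (a x) 0
    · simp [h0, hx h0, hp]
    · rw [ENNReal.coe_toNNReal (ENNReal.div_ne_top ENNReal.coe_ne_top (by simp [h0, hx_top])),
        mul_comm, ENNReal.mul_comm_div]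
  · gcongr with x
    calc (((u x : ℝ≥0∞) / a x ^ (1 / p)).toNNReal : ℝ≥0∞) ^ p * a x
        ≤ (u x / a x ^ (1 / p)) ^ p * a x := by
          gcongr
          exact ENNReal.coe_toNNReal_le_self
      _ = u x ^ p / a x * a x := by
          rw [ENNReal.div_rpow_of_nonneg _ _ hp.le, hroot]
      _ ≤ u x ^ p := ENNReal.mul_le_of_le_div le_rfl

end Densities

section RadialMeasures

variable {p : ℝ} {w v : ℝ → ℝ} {r s : ℝ}

/-- The measure `s w(s) ds` on `(0, 1)`: the radial part, in polar coordinates, of the area measure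
with radial density `w` on the unit disc. The value of `hat1 w` at `0 ≤ r` is the mass of the tail
`Ici r`. -/
def radialMeasure (w : ℝ → ℝ) : Measure ℝ :=
  (volume.restrict (Ioo 0 1)).withDensity fun s => ENNReal.ofReal (s * w s)

/-- The measure `s σ(s) ds` on `(0, 1)`, where `σ` is the weight dual to `v` with respect to `w`
that occurs in the quantity `ApE p w v`. -/
def dualMeasure (p : ℝ) (w v : ℝ → ℝ) : Measure ℝ :=
  (volume.restrict (Ioo 0 1)).withDensity fun s => ENNReal.ofReal s * sigmaE p w v s

lemma withDensity_restrict_Ioo_Ici (a : ℝ → ℝ≥0∞) (hr : 0 ≤ r) :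
    (volume.restrict (Ioo 0 1)).withDensity a (Ici r) = ∫⁻ s in Ioo r 1, a s := by
  rw [withDensity_apply _ measurableSet_Ici, Measure.restrict_restrict measurableSet_Ici]
  refine setLIntegral_congr ?_
  obtain rfl | hr := hr.eq_or_lt
  · exact (inter_eq_right.2 fun s hs => mem_Ici.2 hs.1.le).eventuallyEq
  · rw [show Ici r ∩ Ioo 0 1 = Ico r 1 by ext s; simp; grind]
    exact Ioo_ae_eq_Ico.symm

lemma radialMeasure_Ici (hr : 0 ≤ r) :
    radialMeasure w (Ici r) = ∫⁻ s in Ioo r 1, ENNReal.ofReal (s * w s) :=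
  withDensity_restrict_Ioo_Ici _ hr

lemma dualMeasure_Ici (hr : 0 ≤ r) :
    dualMeasure p w v (Ici r) = ∫⁻ s in Ioo r 1, ENNReal.ofReal s * sigmaE p w v s :=
  withDensity_restrict_Ioo_Ici _ hr

lemma ae_radialMeasure_mem_Ioo : ∀ᵐ r ∂radialMeasure w, r ∈ Ioo (0 : ℝ) 1 :=
  (withDensity_absolutelyContinuous _ _).ae_le (ae_restrict_mem measurableSet_Ioo)

lemma ApE_le_iff {A : ℝ≥0∞} : ApE p w v ≤ A ↔ ∀ r ∈ Ico (0 : ℝ) 1,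
    radialMeasure v (Ici r) ^ (1 / p) * dualMeasure p w v (Ici r) ^ (1 - 1 / p) /
      ENNReal.ofReal (hat1 w r) ≤ A := by
  simp only [ApE, iSup_le_iff]
  refine forall₂_congr fun r hr => ?_
  rw [radialMeasure_Ici hr.1, dualMeasure_Ici hr.1]

lemma ofReal_mul_sigmaE (hp : 1 < p) (hs : 0 < s) :
    ENNReal.ofReal s * sigmaE p w v s = (ENNReal.ofReal (s * w s) /
      ENNReal.ofReal (s * v s) ^ (1 / p)) ^ (p / (p - 1)) := by
  have hpq : p.HolderConjugate (p / (p - 1)) := .conjExponent hp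
  have hs0 : ENNReal.ofReal s ≠ 0 := by simpa using hs
  have hroot : ENNReal.ofReal s / ENNReal.ofReal s ^ (1 / p) =
      ENNReal.ofReal s ^ (1 / (p / (p - 1))) := by
    rw [one_div, one_div, ← hpq.one_sub_inv, ENNReal.rpow_sub _ _ hs0 (by simp), ENNReal.rpow_one]
  have hfactor : ENNReal.ofReal (s * w s) / ENNReal.ofReal (s * v s) ^ (1 / p) =
      ENNReal.ofReal s ^ (1 / (p / (p - 1))) *
        (ENNReal.ofReal (w s) / ENNReal.ofReal (v s) ^ (1 / p)) := by
    rw [ENNReal.ofReal_mul hs.le, ENNReal.ofReal_mul hs.le,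
      ENNReal.mul_rpow_of_nonneg _ _ hpq.one_div_nonneg, ← hroot]
    exact ENNReal.mul_div_mul_comm (by simp [hs]) (by simp [hs])
  rw [sigmaE, hfactor, ENNReal.mul_rpow_of_nonneg _ _ hpq.symm.nonneg, one_div (_ / _),
    ENNReal.rpow_inv_rpow hpq.symm.ne_zero]

namespace IsRadialWeight

lemma aemeasurable_restrict (hw : IsRadialWeight w) :
    AEMeasurable w (volume.restrict (Ioo 0 1)) :=
  (hw.2.1.mono_set Ioo_subset_Ico_self).aemeasurable

lemma mul_nonneg (hw : IsRadialWeight w) (hs : s ∈ Ico (0 : ℝ) 1) : 0 ≤ s * w s :=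
  _root_.mul_nonneg hs.1 (hw.1 s hs)

lemma mul_nonneg_ae (hw : IsRadialWeight w) (hr : 0 ≤ r) :
    0 ≤ᵐ[volume.restrict (Ioo r 1)] fun s => s * w s :=
  (ae_restrict_iff' measurableSet_Ioo).2 (.of_forall fun _ hs =>
    hw.mul_nonneg ⟨hr.trans hs.1.le, hs.2⟩)

lemma integrableOn_mul (hw : IsRadialWeight w) (hr : 0 ≤ r) :
    IntegrableOn (fun s => s * w s) (Ioo r 1) := by
  refine (hw.2.1.mono_set fun s hs => ⟨hr.trans hs.1.le, hs.2⟩).bdd_mul (c := 1) (by fun_prop) ?_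
  exact (ae_restrict_iff' measurableSet_Ioo).2 (.of_forall fun s hs => by
    rw [Real.norm_of_nonneg (hr.trans hs.1.le)]
    exact hs.2.le)

lemma ofReal_hat1_s9 (hw : IsRadialWeight w) (hr : 0 ≤ r) :
    ENNReal.ofReal (hat1 w r) = radialMeasure w (Ici r) := by
  rw [radialMeasure_Ici hr]
  exact ofReal_integral_eq_lintegral_ofReal (hw.integrableOn_mul hr) (hw.mul_nonneg_ae hr)

lemma hat1_nonneg (hw : IsRadialWeight w) (hr : 0 ≤ r) : 0 ≤ hat1 w r :=
  integral_nonneg_of_ae (hw.mul_nonneg_ae hr)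

lemma hat1_pos_s9 (hw : IsRadialWeight w) (hr : r ∈ Ico (0 : ℝ) 1) : 0 < hat1 w r := by
  refine (hw.hat1_nonneg hr.1).lt_of_ne fun h => (hw.2.2 r hr).ne' ?_
  have hzero := (integral_eq_zero_iff_of_nonneg_ae (hw.mul_nonneg_ae hr.1)
    (hw.integrableOn_mul hr.1)).1 h.symm
  refine integral_eq_zero_of_ae ?_
  filter_upwards [hzero, ae_restrict_mem measurableSet_Ioo] with s hs hsr
  exact (mul_eq_zero.1 hs).resolve_left (hr.1.trans_lt hsr.1).ne'

lemma radialMeasure_Ici_ne_zero (hw : IsRadialWeight w) (hr : r ∈ Ico (0 : ℝ) 1) :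
    radialMeasure w (Ici r) ≠ 0 := by
  rw [← hw.ofReal_hat1_s9 hr.1]
  simpa using hw.hat1_pos_s9 hr

lemma isFiniteMeasure_radialMeasure (hw : IsRadialWeight w) :
    IsFiniteMeasure (radialMeasure w) :=
  isFiniteMeasure_withDensity_ofReal (hw.integrableOn_mul le_rfl).2

lemma aemeasurable_ofReal_mul (hw : IsRadialWeight w) :
    AEMeasurable (fun s => ENNReal.ofReal (s * w s)) (volume.restrict (Ioo 0 1)) :=
  (aemeasurable_id.mul hw.aemeasurable_restrict).ennreal_ofReal

lemma lintegral_radialMeasure (hw : IsRadialWeight w) (g : ℝ → ℝ≥0∞) :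
    ∫⁻ s, g s ∂radialMeasure w = ∫⁻ s in Ioo 0 1, g s * ENNReal.ofReal (s * w s) := by
  rw [radialMeasure, lintegral_withDensity_eq_lintegral_mul_non_measurable₀ _
    hw.aemeasurable_ofReal_mul (.of_forall fun s => ENNReal.ofReal_lt_top)]
  simp only [Pi.mul_apply, mul_comm]

lemma lintegral_indicator_Ioi_radialMeasure (hw : IsRadialWeight w) (hr : 0 ≤ r)
    (g : ℝ → ℝ≥0∞) : ∫⁻ s, (Ioi r).indicator g s ∂radialMeasure w =
      ∫⁻ s in Ioo r 1, g s * ENNReal.ofReal (s * w s) := by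
  have hset : Ioi r ∩ Ioo 0 1 = Ioo r 1 := by
    ext s
    simp only [mem_inter_iff, mem_Ioi, mem_Ioo]
    grind
  rw [hw.lintegral_radialMeasure, ← hset, ← setLIntegral_indicator measurableSet_Ioi]
  exact lintegral_congr fun s =>
    (indicator_mul_left (Ioi r) g fun s => ENNReal.ofReal (s * w s)).symm

lemma aemeasurable_ofReal_mul_sigmaE (hw : IsRadialWeight w) (hv : IsRadialWeight v) (p : ℝ) :
    AEMeasurable (fun s => ENNReal.ofReal s * sigmaE p w v s) (volume.restrict (Ioo 0 1)) :=
  aemeasurable_id.ennreal_ofReal.mul <|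
    (hw.aemeasurable_restrict.ennreal_ofReal.div
      (hv.aemeasurable_restrict.ennreal_ofReal.pow_const _)).pow_const _

end IsRadialWeight

lemma tail_le_of_ApE_lt_top (hw : IsRadialWeight w) (hA : ApE p w v < ⊤)
    (hr : r ∈ Ico (0 : ℝ) 1) :
    radialMeasure v (Ici r) ^ (1 / p) * dualMeasure p w v (Ici r) ^ (1 - 1 / p) ≤
      (ApE p w v).toNNReal * radialMeasure w (Ici r) := by
  have := ApE_le_iff.1 (le_refl (ApE p w v)) r hr
  rw [ENNReal.coe_toNNReal hA.ne]
  rwa [hw.ofReal_hat1_s9 hr.1, ENNReal.div_le_iff (hw.radialMeasure_Ici_ne_zero hr)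
    (by rw [← hw.ofReal_hat1_s9 hr.1]; exact ENNReal.ofReal_ne_top)] at this

lemma isFiniteMeasure_dualMeasure (hp : 1 < p) (hw : IsRadialWeight w) (hv : IsRadialWeight v)
    (hA : ApE p w v < ⊤) : IsFiniteMeasure (dualMeasure p w v) := by
  have h0 : (0 : ℝ) ∈ Ico (0 : ℝ) 1 := by simp
  have := hv.isFiniteMeasure_radialMeasure
  have := hw.isFiniteMeasure_radialMeasure
  have hp1 : 0 < 1 - 1 / p := sub_pos.2 ((div_lt_one (zero_lt_one.trans hp)).2 hp)
  have htail := tail_le_of_ApE_lt_top hw hA h0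
  refine isFiniteMeasure_withDensity ?_
  rw [← dualMeasure_Ici le_rfl]
  intro hN
  rw [hN, ENNReal.top_rpow_of_pos hp1, ENNReal.mul_top] at htail
  · exact (ENNReal.mul_lt_top ENNReal.coe_lt_top (measure_lt_top _ _)).not_ge htail
  · simp [hv.radialMeasure_Ici_ne_zero h0]

lemma ofReal_eq_rpow_mul_rpow (hp : 1 < p) (hs : 0 < s) (hσ : sigmaE p w v s ≠ ⊤) :
    ENNReal.ofReal (s * w s) = ENNReal.ofReal (s * v s) ^ (1 / p) *
      (ENNReal.ofReal s * sigmaE p w v s) ^ (1 / (p / (p - 1))) := by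
  have hpq : p.HolderConjugate (p / (p - 1)) := .conjExponent hp
  have hfin : ENNReal.ofReal s * sigmaE p w v s ≠ ⊤ := ENNReal.mul_ne_top (by simp) hσ
  rw [ofReal_mul_sigmaE hp hs] at hfin ⊢
  rw [one_div (_ / _), ENNReal.rpow_rpow_inv hpq.symm.ne_zero]
  obtain h0 | h0 := eq_or_ne (ENNReal.ofReal (s * v s) ^ (1 / p)) 0
  · rw [h0, zero_mul]
    by_contra hne
    rw [h0, ENNReal.div_zero hne, ENNReal.top_rpow_of_pos hpq.symm.pos] at hfin
    exact hfin rfl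
  · exact (ENNReal.mul_div_cancel h0 (by finiteness)).symm

theorem exists_isTailMuckenhoupt_of_ApE_lt_top (hp : 1 < p) (hw : IsRadialWeight w)
    (hv : IsRadialWeight v) (hA : ApE p w v < ⊤) : ∃ A : ℝ≥0,
    IsTailMuckenhoupt p (p / (p - 1)) (radialMeasure v) (dualMeasure p w v) (radialMeasure w) A ∧
      IsTailMuckenhoupt (p / (p - 1)) p (dualMeasure p w v) (radialMeasure v) (radialMeasure w)
        A := by
  have hpq : p.HolderConjugate (p / (p - 1)) := .conjExponent hp
  have hb := hw.aemeasurable_ofReal_mul_sigmaE hv p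
  have hfin := isFiniteMeasure_dualMeasure hp hw hv hA
  have hσ : ∀ᵐ s ∂volume.restrict (Ioo 0 1), ENNReal.ofReal s * sigmaE p w v s ≠ ⊤ := by
    refine (ae_lt_top' hb ?_).mono fun s hs => hs.ne
    rw [← dualMeasure_Ici le_rfl]
    exact measure_ne_top _ _
  have hden : ∀ᵐ s ∂volume.restrict (Ioo 0 1), ENNReal.ofReal (s * w s) =
      ENNReal.ofReal (s * v s) ^ (1 / p) *
        (ENNReal.ofReal s * sigmaE p w v s) ^ (1 / (p / (p - 1))) := by
    filter_upwards [hσ, ae_restrict_mem measurableSet_Ioo] with s hs hs01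
    refine ofReal_eq_rpow_mul_rpow hp hs01.1 fun h => hs ?_
    rw [h, ENNReal.mul_top (by simpa using hs01.1)]
  have htail : ∀ᵐ r ∂volume.restrict (Ioo 0 1),
      radialMeasure v (Ici r) ^ (1 / p) * dualMeasure p w v (Ici r) ^ (1 / (p / (p - 1))) ≤
        (ApE p w v).toNNReal * radialMeasure w (Ici r) := by
    filter_upwards [ae_restrict_mem measurableSet_Ioo] with r hr
    rw [one_div (_ / _), ← hpq.one_sub_inv, ← one_div]
    exact tail_le_of_ApE_lt_top hw hA (Ioo_subset_Ico_self hr)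
  refine ⟨(ApE p w v).toNNReal, .of_withDensity hpq hv.aemeasurable_ofReal_mul hb
    (.of_forall fun s => ENNReal.ofReal_ne_top) hden htail,
    .of_withDensity hpq.symm hb hv.aemeasurable_ofReal_mul hσ (hden.mono fun s hs => ?_)
      (htail.mono fun r hr => ?_)⟩
  · rw [hs, mul_comm]
  · rwa [mul_comm]

theorem exists_lintegral_radialMeasure_stieltjes_le (hp : 1 < p) (hw : IsRadialWeight w)
    (hv : IsRadialWeight v) (hA : ApE p w v < ⊤) : ∃ C : ℝ≥0, ∀ g : ℝ → ℝ≥0∞, Measurable g →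
      ∫⁻ r, (∫⁻ s, g s / (radialMeasure w (Ici s) + radialMeasure w (Ici r)) ∂radialMeasure w) ^ p
        ∂radialMeasure v ≤ C * ∫⁻ r, g r ^ p ∂radialMeasure v := by
  have := hv.isFiniteMeasure_radialMeasure
  have := hw.isFiniteMeasure_radialMeasure
  have := isFiniteMeasure_dualMeasure hp hw hv hA
  obtain ⟨A, hμ, hν⟩ := exists_isTailMuckenhoupt_of_ApE_lt_top hp hw hv hA
  exact hμ.exists_lintegral_stieltjes_rpow_le hν (.conjExponent hp)

end RadialMeasures

section PolarCoordinates

variable {p : ℝ} {v : ℝ → ℝ}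

lemma norm_polarCoord_symm_of_pos {r : ℝ} (hr : 0 < r) (θ : ℝ) :
    ‖Complex.polarCoord.symm (r, θ)‖ = r := by
  rw [Complex.norm_polarCoord_symm, abs_of_pos hr]

lemma div_norm_smul_polarCoord_symm {r : ℝ} (hr : 0 < r) (s θ : ℝ) :
    ((s / ‖Complex.polarCoord.symm (r, θ)‖) • Complex.polarCoord.symm (r, θ) : ℂ) =
      Complex.polarCoord.symm (s, θ) := by
  have : (r : ℂ) ≠ 0 := by exact_mod_cast hr.ne'
  rw [norm_polarCoord_symm_of_pos hr]
  simp only [Complex.polarCoord_symm_apply, Complex.real_smul]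
  push_cast
  field_simp

lemma measurable_polarCoord_symm : Measurable (Complex.polarCoord.symm : ℝ × ℝ → ℂ) := by
  rw [funext Complex.polarCoord_symm_apply]
  fun_prop

lemma setLIntegral_ball_eq_setLIntegral_polarCoord_symm (g : ℂ → ℝ≥0∞) :
    ∫⁻ z in ball 0 1, g z = ∫⁻ x in Ioo (0 : ℝ) 1 ×ˢ Ioo (-Real.pi) Real.pi,
      ENNReal.ofReal x.1 * g (Complex.polarCoord.symm x) := by
  have hball : MeasurableSet (Complex.polarCoord.symm ⁻¹' ball 0 1) :=
    measurable_polarCoord_symm measurableSet_ball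
  have hset : Complex.polarCoord.symm ⁻¹' ball 0 1 ∩ polarCoord.target =
      Ioo (0 : ℝ) 1 ×ˢ Ioo (-Real.pi) Real.pi := by
    ext x
    simp only [mem_inter_iff, mem_preimage, mem_ball_zero_iff, Complex.norm_polarCoord_symm,
      polarCoord_target, mem_prod, mem_Ioi, mem_Ioo, abs_lt]
    grind
  rw [← lintegral_indicator measurableSet_ball, ← Complex.lintegral_comp_polarCoord_symm, ← hset,
    ← setLIntegral_indicator hball]
  exact lintegral_congr fun x => by simp [indicator]

lemma lintegral_ball_mul_ofReal (hv : IsRadialWeight v) (g : ℂ → ℝ≥0∞) :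
    ∫⁻ z in ball 0 1, g z * ENNReal.ofReal (v ‖z‖) = ∫⁻ x, g (Complex.polarCoord.symm x)
      ∂(radialMeasure v).prod (volume.restrict (Ioo (-Real.pi) Real.pi)) := by
  have := hv.isFiniteMeasure_radialMeasure
  rw [setLIntegral_ball_eq_setLIntegral_polarCoord_symm, radialMeasure,
    prod_withDensity_left₀ hv.aemeasurable_ofReal_mul,
    lintegral_withDensity_eq_lintegral_mul_non_measurable₀ _
      hv.aemeasurable_ofReal_mul.comp_fst (.of_forall fun x => ENNReal.ofReal_lt_top),
    Measure.prod_restrict, ← Measure.volume_eq_prod]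
  refine setLIntegral_congr_fun (measurableSet_Ioo.prod measurableSet_Ioo) fun x hx => ?_
  obtain ⟨r, θ⟩ := x
  have hr : 0 < r := hx.1.1
  simp only [Pi.mul_apply, norm_polarCoord_symm_of_pos hr, ENNReal.ofReal_mul hr.le]
  ring

lemma LpE_eq (hv : IsRadialWeight v) (g : ℂ → ℝ≥0∞) :
    LpE p v g = ((∫⁻ x, g (Complex.polarCoord.symm x) ^ p
      ∂(radialMeasure v).prod (volume.restrict (Ioo (-Real.pi) Real.pi))) /
        ENNReal.ofReal Real.pi) ^ (1 / p) := by
  rw [LpE, lintegral_ball_mul_ofReal hv fun z => g z ^ p]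

lemma LpR_eq_LpE (hp : 0 ≤ p) (v : ℝ → ℝ) (f : ℂ → ℝ) :
    LpR p v f = LpE p v fun z => ENNReal.ofReal |f z| := by
  simp only [LpR, LpE, ENNReal.ofReal_rpow_of_nonneg (abs_nonneg _) hp,
    ENNReal.ofReal_mul (Real.rpow_nonneg (abs_nonneg _) p)]

theorem LpE_le_mul_of_forall_ray (hp : 0 < p) (hv : IsRadialWeight v) {g h : ℂ → ℝ≥0∞}
    (hh : Measurable h) {C : ℝ≥0∞} (hC : C ≠ ⊤)
    (hgh : ∀ θ, ∫⁻ r, g (Complex.polarCoord.symm (r, θ)) ^ p ∂radialMeasure v ≤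
      C * ∫⁻ r, h (Complex.polarCoord.symm (r, θ)) ^ p ∂radialMeasure v) :
    LpE p v g ≤ C ^ (1 / p) * LpE p v h := by
  have := hv.isFiniteMeasure_radialMeasure
  have hmeas : Measurable fun x => h (Complex.polarCoord.symm x) ^ p :=
    (hh.comp measurable_polarCoord_symm).pow_const p
  have hprod : ∫⁻ x, g (Complex.polarCoord.symm x) ^ p
        ∂(radialMeasure v).prod (volume.restrict (Ioo (-Real.pi) Real.pi)) ≤
      C * ∫⁻ x, h (Complex.polarCoord.symm x) ^ p
        ∂(radialMeasure v).prod (volume.restrict (Ioo (-Real.pi) Real.pi)) := by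
    rw [lintegral_prod_symm' _ hmeas, ← lintegral_const_mul' _ _ hC, ← lintegral_prod_swap]
    exact (lintegral_prod_le _).trans (lintegral_mono fun θ => hgh θ)
  rw [LpE_eq hv, LpE_eq hv, ← ENNReal.mul_rpow_of_nonneg _ _ (by positivity), ← mul_div_assoc]
  gcongr

lemma LpE_comp_norm (hv : IsRadialWeight v) {k : ℝ → ℝ≥0∞} (hk : Measurable k) :
    LpE p v (fun z => k ‖z‖) = (2 * ∫⁻ r, k r ^ p ∂radialMeasure v) ^ (1 / p) := by
  have hint : ∫⁻ x : ℝ × ℝ, k |x.1| ^ p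
        ∂(radialMeasure v).prod (volume.restrict (Ioo (-Real.pi) Real.pi)) =
      (∫⁻ r, k r ^ p ∂radialMeasure v) * ENNReal.ofReal (2 * Real.pi) := by
    have := hv.isFiniteMeasure_radialMeasure
    rw [lintegral_prod _ (by fun_prop)]
    simp only [lintegral_const, Measure.restrict_apply_univ, Real.volume_Ioo, sub_neg_eq_add,
      ← two_mul]
    rw [lintegral_mul_const _ (by fun_prop)]
    congr 1
    exact lintegral_congr_ae <| ae_radialMeasure_mem_Ioo.mono fun r hr => by
      simp only [abs_of_pos hr.1]
  simp only [LpE_eq hv, Complex.norm_polarCoord_symm, hint]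
  rw [ENNReal.ofReal_mul zero_le_two, ENNReal.ofReal_ofNat, mul_div_assoc,
    ENNReal.mul_div_cancel_right (by simpa using Real.pi_pos) (by simp), mul_comm]

lemma LpE_indicator_Ioi_comp_norm (hp : 0 < p) (hv : IsRadialWeight v) {r : ℝ} (hr : 0 ≤ r)
    {k : ℝ → ℝ≥0∞} (hk : Measurable k) :
    LpE p v (fun z => (Ioi r).indicator k ‖z‖) =
      (2 * ∫⁻ s in Ioo r 1, k s ^ p * ENNReal.ofReal (s * v s)) ^ (1 / p) := by
  rw [LpE_comp_norm hv (hk.indicator measurableSet_Ioi),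
    ← hv.lintegral_indicator_Ioi_radialMeasure hr]
  congr 3 with s
  by_cases hs : s ∈ Ioi r <;> simp [hs, hp]

end PolarCoordinates

section Boundedness

variable {p : ℝ} {v : ℝ → ℝ} {S T : (ℂ → ℝ) → ℂ → ℝ≥0∞}

/-- The operator `T`, sending real functions on the unit disc to `ℝ≥0∞`-valued ones, is bounded on
`L^p_v`. -/
def LpBounded (p : ℝ) (v : ℝ → ℝ) (T : (ℂ → ℝ) → ℂ → ℝ≥0∞) : Prop :=
  ∃ C > (0 : ℝ), ∀ f : ℂ → ℝ, Measurable f → LpR p v f < ⊤ →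
    LpE p v (T f) ≤ ENNReal.ofReal C * LpR p v f

/-- The restriction of `T` to the nonnegative functions in `L^p_v` is bounded. For the integral
operators in question this is the meaningful notion, since an `ℝ≥0∞`-valued integral discards the
negative part of its integrand. -/
def LpBoundedOnNonneg (p : ℝ) (v : ℝ → ℝ) (T : (ℂ → ℝ) → ℂ → ℝ≥0∞) : Prop :=
  ∃ C > (0 : ℝ), ∀ f : ℂ → ℝ, Measurable f → (∀ z, 0 ≤ f z) → LpR p v f < ⊤ →
    LpE p v (T f) ≤ ENNReal.ofReal C * LpR p v f

lemma LpE_le_const_mul (hp : 0 < p) (v : ℝ → ℝ) {g h : ℂ → ℝ≥0∞} {c : ℝ≥0∞} (hc : c ≠ ⊤)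
    (hgh : ∀ z ∈ ball (0 : ℂ) 1, g z ≤ c * h z) : LpE p v g ≤ c * LpE p v h := by
  have hint : ∫⁻ z in ball (0 : ℂ) 1, g z ^ p * ENNReal.ofReal (v ‖z‖) ≤
      c ^ p * ∫⁻ z in ball (0 : ℂ) 1, h z ^ p * ENNReal.ofReal (v ‖z‖) := by
    rw [← lintegral_const_mul' _ _ (by finiteness)]
    refine setLIntegral_mono' measurableSet_ball fun z hz => ?_
    rw [← mul_assoc, ← ENNReal.mul_rpow_of_nonneg _ _ hp.le]
    gcongr
    exact hgh z hz
  rw [LpE, LpE, ← ENNReal.rpow_rpow_inv hp.ne' c, ← one_div,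
    ← ENNReal.mul_rpow_of_nonneg _ _ (by positivity), ← mul_div_assoc]
  gcongr

lemma LpBoundedOnNonneg.of_le_const_mul (hp : 0 < p) {c : ℝ≥0} (hT : LpBoundedOnNonneg p v T)
    (hST : ∀ f, ∀ z ∈ ball (0 : ℂ) 1, S f z ≤ c * T f z) : LpBoundedOnNonneg p v S := by
  obtain ⟨C, hC0, hC⟩ := hT
  refine ⟨(c + 1) * C, by positivity, fun f hf hf0 hfin => ?_⟩
  calc LpE p v (S f) ≤ (c + 1 : ℝ≥0) * LpE p v (T f) :=
        LpE_le_const_mul hp v ENNReal.coe_ne_top fun z hz =>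
          (hST f z hz).trans (by gcongr; exact le_self_add)
    _ ≤ (c + 1 : ℝ≥0) * (ENNReal.ofReal C * LpR p v f) := by gcongr; exact hC f hf hf0 hfin
    _ = ENNReal.ofReal ((c + 1) * C) * LpR p v f := by
        rw [ENNReal.ofReal_mul (by positivity), mul_assoc]
        congr 1
        exact (ENNReal.ofReal_coe_nnreal (p := c + 1)).symm

lemma LpBoundedOnNonneg.lpBounded_of_le_comp_abs (hp : 0 < p) (hT : LpBoundedOnNonneg p v T)
    (hST : ∀ f, ∀ z ∈ ball (0 : ℂ) 1, S f z ≤ T (fun z => |f z|) z) : LpBounded p v S := by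
  obtain ⟨C, hC0, hC⟩ := hT
  refine ⟨C, hC0, fun f hf hfin => ?_⟩
  have habs : LpR p v (fun z => |f z|) = LpR p v f := by simp only [LpR, abs_abs]
  rw [← habs] at hfin ⊢
  calc LpE p v (S f) ≤ 1 * LpE p v (T fun z => |f z|) :=
        LpE_le_const_mul hp v ENNReal.one_ne_top fun z hz => by rw [one_mul]; exact hST f z hz
    _ ≤ ENNReal.ofReal C * LpR p v fun z => |f z| := by
        rw [one_mul]
        exact hC _ (by fun_prop) (fun z => abs_nonneg _) hfin

end Boundedness

section Sufficiency

variable {p : ℝ} {w v : ℝ → ℝ} {f : ℂ → ℝ} {r : ℝ}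

lemma SE_polarCoord_symm (hw : IsRadialWeight w) (hf : ∀ z, 0 ≤ f z) (hr : 0 < r) (θ : ℝ) :
    SE w f (Complex.polarCoord.symm (r, θ)) =
      ∫⁻ s, ENNReal.ofReal (f (Complex.polarCoord.symm (s, θ))) /
        (radialMeasure w (Ici s) + radialMeasure w (Ici r)) ∂radialMeasure w := by
  rw [SE, hw.lintegral_radialMeasure]
  refine setLIntegral_congr_fun measurableSet_Ioo fun s hs => ?_
  have hray := div_norm_smul_polarCoord_symm hr s θ
  rw [norm_polarCoord_symm_of_pos hr] at hray
  simp only [norm_polarCoord_symm_of_pos hr, hray, ENNReal.ofReal_mul (hf _),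
    ENNReal.ofReal_add (hw.hat1_nonneg hs.1.le) (hw.hat1_nonneg hr.le), hw.ofReal_hat1_s9 hs.1.le,
    hw.ofReal_hat1_s9 hr.le, ENNReal.mul_div_right_comm]

theorem lpBoundedOnNonneg_SE_of_ApE_lt_top (hp : 1 < p) (hw : IsRadialWeight w)
    (hv : IsRadialWeight v) (hA : ApE p w v < ⊤) : LpBoundedOnNonneg p v (SE w) := by
  have hp0 : 0 < p := zero_lt_one.trans hp
  obtain ⟨C, hC⟩ := exists_lintegral_radialMeasure_stieltjes_le hp hw hv hA
  refine ⟨(C : ℝ) ^ (1 / p) + 1, by positivity, fun f hf hf0 _ => ?_⟩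
  have hnorm : LpE p v (SE w f) ≤ (C : ℝ≥0∞) ^ (1 / p) * LpR p v f := by
    rw [LpR_eq_LpE hp0.le]
    refine LpE_le_mul_of_forall_ray hp0 hv (by fun_prop) ENNReal.coe_ne_top fun θ => ?_
    simp only [abs_of_nonneg (hf0 _)]
    rw [lintegral_congr_ae (ae_radialMeasure_mem_Ioo.mono fun r hr => by
      rw [SE_polarCoord_symm hw hf0 hr.1])]
    exact hC (fun s => ENNReal.ofReal (f (Complex.polarCoord.symm (s, θ))))
      (hf.comp (measurable_polarCoord_symm.comp measurable_prodMk_right)).ennreal_ofReal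
  refine hnorm.trans ?_
  gcongr
  rw [← ENNReal.ofReal_coe_nnreal, ENNReal.ofReal_rpow_of_nonneg (by positivity) (by positivity)]
  exact ENNReal.ofReal_le_ofReal (by linarith)

end Sufficiency

section Comparison

variable {w : ℝ → ℝ} {z : ℂ} {r s : ℝ}

lemma IsRadialWeight.ofReal_hat1_anti (hw : IsRadialWeight w) (hr : 0 ≤ r) (hrs : r ≤ s) :
    ENNReal.ofReal (hat1 w s) ≤ ENNReal.ofReal (hat1 w r) := by
  rw [hw.ofReal_hat1_s9 hr, hw.ofReal_hat1_s9 (hr.trans hrs)]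
  exact measure_mono (Ici_subset_Ici.2 hrs)

lemma inv_le_two_mul_inv_add {x y : ℝ≥0∞} (h : y ≤ x) : x⁻¹ ≤ 2 * (x + y)⁻¹ := by
  calc x⁻¹ = 2 * (2 * x)⁻¹ := by
        rw [ENNReal.mul_inv (by simp) (by simp), ← mul_assoc,
          ENNReal.mul_inv_cancel (by simp) (by simp), one_mul]
    _ ≤ 2 * (x + y)⁻¹ := by
        rw [two_mul x]
        gcongr

lemma HE_le_two_mul_setLIntegral (hw : IsRadialWeight w) (f : ℂ → ℝ) (hz : ‖z‖ < 1) :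
    HE w f z ≤ 2 * ∫⁻ s in Ioo ‖z‖ 1, ENNReal.ofReal (f ((s / ‖z‖) • z) * (s * w s)) /
      ENNReal.ofReal (hat1 w s + hat1 w ‖z‖) := by
  have hz0 : 0 ≤ ‖z‖ := norm_nonneg z
  have hpos := hw.hat1_pos_s9 ⟨hz0, hz⟩
  rw [HE, div_eq_mul_inv, ← lintegral_mul_const' _ _ (by simpa using hpos),
    ← lintegral_const_mul' _ _ (by simp)]
  refine setLIntegral_mono' measurableSet_Ioo fun s hs => ?_
  rw [ENNReal.ofReal_add (hw.hat1_nonneg (hz0.trans hs.1.le)) hpos.le,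
    div_eq_mul_inv (ENNReal.ofReal _), mul_left_comm 2, add_comm]
  gcongr
  exact inv_le_two_mul_inv_add (hw.ofReal_hat1_anti hz0 hs.1.le)

lemma HstarE_le_two_mul_setLIntegral (hw : IsRadialWeight w) (f : ℂ → ℝ) (z : ℂ) :
    HstarE w f z ≤ 2 * ∫⁻ s in Ioo 0 ‖z‖, ENNReal.ofReal (f ((s / ‖z‖) • z) * (s * w s)) /
      ENNReal.ofReal (hat1 w s + hat1 w ‖z‖) := by
  rw [HstarE, ← lintegral_const_mul' _ _ (by simp)]
  refine setLIntegral_mono' measurableSet_Ioo fun s hs => ?_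
  rw [ENNReal.ofReal_add (hw.hat1_nonneg hs.1.le) (hw.hat1_nonneg (norm_nonneg z)),
    div_eq_mul_inv (ENNReal.ofReal _), div_eq_mul_inv (ENNReal.ofReal _), mul_left_comm 2]
  gcongr
  exact inv_le_two_mul_inv_add (hw.ofReal_hat1_anti hs.1.le hs.2.le)

theorem HE_add_HstarE_le_two_mul_SE (hw : IsRadialWeight w) (f : ℂ → ℝ) (hz : ‖z‖ < 1) :
    HE w f z + HstarE w f z ≤ 2 * SE w f z := by
  have hdisj : Disjoint (Ioo ‖z‖ 1) (Ioo 0 ‖z‖) :=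
    disjoint_left.2 fun s hs hs' => lt_asymm hs.1 hs'.2
  refine (add_le_add (HE_le_two_mul_setLIntegral hw f hz)
    (HstarE_le_two_mul_setLIntegral hw f z)).trans ?_
  rw [← mul_add, ← lintegral_union measurableSet_Ioo hdisj, SE]
  gcongr
  exact union_subset (Ioo_subset_Ioo_left (norm_nonneg z)) (Ioo_subset_Ioo_right hz.le)

theorem MradE_le_HE_add_HstarE_abs (hw : IsRadialWeight w) (f : ℂ → ℝ) (z : ℂ) :
    MradE w f z ≤ HE w (fun z => |f z|) z + HstarE w (fun z => |f z|) z := by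
  refine iSup₂_le fun b hb => ?_
  set F : ℝ → ℝ≥0∞ := fun s => ENNReal.ofReal (|f ((s / ‖z‖) • z)| * (s * w s))
  have hsplit : ∫⁻ s in Ioo b 1, F s ≤ (∫⁻ s in Ioo ‖z‖ 1, F s) + ∫⁻ s in Ioo b ‖z‖, F s := by
    rw [setLIntegral_congr (Ioo_ae_eq_Ioc (a := b) (b := ‖z‖)), add_comm]
    exact (lintegral_mono_set Ioo_subset_Ioc_union_Ioo).trans (lintegral_union_le _ _ _)
  have hinner : (∫⁻ s in Ioo b ‖z‖, F s) / ENNReal.ofReal (hat1 w b) ≤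
      HstarE w (fun z => |f z|) z := by
    calc (∫⁻ s in Ioo b ‖z‖, F s) / ENNReal.ofReal (hat1 w b)
        ≤ ∫⁻ s in Ioo b ‖z‖, F s / ENNReal.ofReal (hat1 w b) := by
          simp only [div_eq_mul_inv]
          exact lintegral_mul_const_le _ _
      _ ≤ ∫⁻ s in Ioo b ‖z‖, F s / ENNReal.ofReal (hat1 w s) :=
          setLIntegral_mono' measurableSet_Ioo fun s hs =>
            ENNReal.div_le_div_left (hw.ofReal_hat1_anti hb.1 hs.1.le) _
      _ ≤ HstarE w (fun z => |f z|) z := lintegral_mono_set (Ioo_subset_Ioo_left hb.1)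
  calc (∫⁻ s in Ioo b 1, F s) / ENNReal.ofReal (hat1 w b)
      ≤ (∫⁻ s in Ioo ‖z‖ 1, F s) / ENNReal.ofReal (hat1 w b) +
        (∫⁻ s in Ioo b ‖z‖, F s) / ENNReal.ofReal (hat1 w b) := by
        rw [← ENNReal.add_div]
        gcongr
    _ ≤ HE w (fun z => |f z|) z + HstarE w (fun z => |f z|) z := by
        refine add_le_add ?_ hinner
        exact ENNReal.div_le_div_left (hw.ofReal_hat1_anti hb.1 hb.2.le) _

end Comparison

section Necessity

variable {p : ℝ} {w v : ℝ → ℝ} {r : ℝ} {z : ℂ}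

lemma setLIntegral_div_le_MradE_comp_norm (w : ℝ → ℝ) (g : ℝ → ℝ≥0) (hr : 0 ≤ r) (hz : r < ‖z‖) :
    (∫⁻ s in Ioo r 1, g s * ENNReal.ofReal (s * w s)) / ENNReal.ofReal (hat1 w r) ≤
      MradE w (fun z => ((Ioi r).indicator g ‖z‖ : ℝ≥0)) z := by
  refine le_iSup₂_of_le r ⟨hr, hz⟩ (ENNReal.div_le_div_right ?_ _)
  refine setLIntegral_mono' measurableSet_Ioo fun s hs => ?_
  have hs0 : 0 < s := hr.trans_lt hs.1
  have hnorm : ‖(s / ‖z‖) • z‖ = s := by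
    rw [norm_smul, norm_div, norm_norm, Real.norm_of_nonneg hs0.le,
      div_mul_cancel₀ _ (hr.trans_lt hz).ne']
  simp only [hnorm]
  rw [indicator_of_mem (mem_Ioi.2 hs.1), NNReal.abs_eq,
    ENNReal.ofReal_mul (g s).coe_nonneg, ENNReal.ofReal_coe_nnreal]

lemma setLIntegral_mul_le_of_forall_LpE_MradE_le (hp : 0 < p) (hv : IsRadialWeight v) {C : ℝ}
    (hC : 0 < C) (hM : ∀ f : ℂ → ℝ, Measurable f → LpR p v f < ⊤ →
      LpE p v (MradE w f) ≤ ENNReal.ofReal C * LpR p v f)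
    (hr : 0 ≤ r) {g : ℝ → ℝ≥0} (hg : Measurable g) :
    (∫⁻ s in Ioo r 1, g s * ENNReal.ofReal (s * w s)) / ENNReal.ofReal (hat1 w r) *
        radialMeasure v (Ici r) ^ (1 / p) ≤
      ENNReal.ofReal C *
        (∫⁻ s in Ioo r 1, (g s : ℝ≥0∞) ^ p * ENNReal.ofReal (s * v s)) ^ (1 / p) := by
  obtain hJ | hJ := eq_or_ne (∫⁻ s in Ioo r 1, (g s : ℝ≥0∞) ^ p * ENNReal.ofReal (s * v s)) ⊤
  · simp [hJ, hp, hC]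
  set a := (∫⁻ s in Ioo r 1, g s * ENNReal.ofReal (s * w s)) / ENNReal.ofReal (hat1 w r)
  set f : ℂ → ℝ := fun z => ((Ioi r).indicator g ‖z‖ : ℝ≥0)
  have hnorm_f : LpR p v f =
      (2 * ∫⁻ s in Ioo r 1, (g s : ℝ≥0∞) ^ p * ENNReal.ofReal (s * v s)) ^ (1 / p) := by
    rw [LpR_eq_LpE hp.le, ← LpE_indicator_Ioi_comp_norm hp hv hr (by fun_prop)]
    congr 1 with z
    by_cases hz : ‖z‖ ∈ Ioi r <;> simp [f, hz]
  have hnorm_a : LpE p v (fun z => (Ioi r).indicator (fun _ => a) ‖z‖) =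
      (2 * (a ^ p * radialMeasure v (Ici r))) ^ (1 / p) := by
    rw [LpE_indicator_Ioi_comp_norm hp hv hr measurable_const, radialMeasure_Ici hr,
      lintegral_const_mul'' _ (hv.aemeasurable_ofReal_mul.mono_set (Ioo_subset_Ioo_left hr))]
  have hle : LpE p v (fun z => (Ioi r).indicator (fun _ => a) ‖z‖) ≤ LpE p v (MradE w f) := by
    rw [← one_mul (LpE p v (MradE w f))]
    refine LpE_le_const_mul hp v ENNReal.one_ne_top fun z _ => ?_
    rw [one_mul]
    exact indicator_apply_le' (fun hz => setLIntegral_div_le_MradE_comp_norm w g hr hz)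
      fun _ => zero_le
  have hf : Measurable f := ((hg.indicator measurableSet_Ioi).comp measurable_norm).coe_nnreal_real
  have hbound := hle.trans (hM f hf (by rw [hnorm_f]; finiteness))
  have hp' : 0 ≤ 1 / p := by positivity
  rw [hnorm_f, hnorm_a, ENNReal.mul_rpow_of_nonneg _ _ hp', ENNReal.mul_rpow_of_nonneg _ _ hp',
    ENNReal.mul_rpow_of_nonneg _ _ hp', one_div, ENNReal.rpow_rpow_inv hp.ne',
    mul_left_comm (ENNReal.ofReal C)] at hbound
  rw [one_div]
  exact (ENNReal.mul_le_mul_iff_right (by simp) (by finiteness)).1 hbound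

lemma dualMeasure_Ici_le_of_forall_setLIntegral_mul_le (hp : 1 < p) (hw : IsRadialWeight w)
    (hv : IsRadialWeight v) (hr : 0 ≤ r) {K : ℝ≥0∞}
    (h : ∀ g : ℝ → ℝ≥0, Measurable g → ∫⁻ s in Ioo r 1, g s * ENNReal.ofReal (s * w s) ≤
      K * (∫⁻ s in Ioo r 1, (g s : ℝ≥0∞) ^ p * ENNReal.ofReal (s * v s)) ^ (1 / p)) :
    dualMeasure p w v (Ici r) ^ (1 - 1 / p) ≤ K := by
  have hpq : p.HolderConjugate (p / (p - 1)) := .conjExponent hp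
  have hsub : Ioo r 1 ⊆ Ioo (0 : ℝ) 1 := Ioo_subset_Ioo_left hr
  have hdual : dualMeasure p w v (Ici r) = ∫⁻ s in Ioo r 1, (ENNReal.ofReal (s * w s) /
      ENNReal.ofReal (s * v s) ^ (1 / p)) ^ (p / (p - 1)) := by
    rw [dualMeasure_Ici hr]
    exact setLIntegral_congr_fun measurableSet_Ioo fun s hs =>
      ofReal_mul_sigmaE hp (hr.trans_lt hs.1)
  rw [one_div, hpq.one_sub_inv, ENNReal.rpow_inv_le_iff hpq.symm.pos, hdual]
  exact lintegral_div_rpow_le_of_forall_lintegral_mul_le hpq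
    (hv.aemeasurable_ofReal_mul.mono_set hsub) (hw.aemeasurable_ofReal_mul.mono_set hsub)
    (.of_forall fun s => ENNReal.ofReal_ne_top) h

theorem ApE_le_of_forall_LpE_MradE_le (hp : 1 < p) (hw : IsRadialWeight w)
    (hv : IsRadialWeight v) {C : ℝ} (hC : 0 < C)
    (hM : ∀ f : ℂ → ℝ, Measurable f → LpR p v f < ⊤ →
      LpE p v (MradE w f) ≤ ENNReal.ofReal C * LpR p v f) : ApE p w v ≤ ENNReal.ofReal C := by
  have hp0 : 0 < p := zero_lt_one.trans hp
  refine ApE_le_iff.2 fun r hr => ?_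
  have := hv.isFiniteMeasure_radialMeasure
  set M := radialMeasure v (Ici r) ^ (1 / p)
  set W := ENNReal.ofReal (hat1 w r)
  have hM0 : M ≠ 0 := by simp [M, hv.radialMeasure_Ici_ne_zero hr]
  have hM_top : M ≠ ⊤ := by finiteness
  have hW0 : W ≠ 0 := by simpa [W] using hw.hat1_pos_s9 hr
  have hdual : dualMeasure p w v (Ici r) ^ (1 - 1 / p) ≤ ENNReal.ofReal C * W / M := by
    refine dualMeasure_Ici_le_of_forall_setLIntegral_mul_le hp hw hv hr.1 fun g hg => ?_
    have htest := setLIntegral_mul_le_of_forall_LpE_MradE_le hp0 hv hC hM hr.1 hg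
    rw [← ENNReal.le_div_iff_mul_le (.inl hM0) (.inl hM_top),
      ENNReal.div_le_iff hW0 ENNReal.ofReal_ne_top] at htest
    refine htest.trans_eq ?_
    simp only [div_eq_mul_inv]
    ring
  calc M * dualMeasure p w v (Ici r) ^ (1 - 1 / p) / W
      ≤ M * (ENNReal.ofReal C * W / M) / W := by gcongr
    _ = ENNReal.ofReal C := by
        rw [ENNReal.mul_div_cancel hM0 hM_top,
          ENNReal.mul_div_cancel_right hW0 ENNReal.ofReal_ne_top]

end Necessity

/-- Theorem: Calderón operator. Let `1 < p < ∞` and let `ω` and `ν` be radial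
weights. Then the following are equivalent: (i) `H_ω + H*_ω` is bounded on `L^p_ν` (on
nonnegative functions); (ii) `S_{ω₁,rad}` is bounded on `L^p_ν` (on nonnegative functions);
(iii) `M_{ω₁,rad}` is bounded on `L^p_ν`; (iv) `A_p(ω,ν) < ∞`. -/
theorem calderon_tfae (p : ℝ) (hp : 1 < p) (w v : ℝ → ℝ)
    (hw : IsRadialWeight w) (hv : IsRadialWeight v) :
    ((∃ C > (0:ℝ), ∀ f : ℂ → ℝ, Measurable f → (∀ z, 0 ≤ f z) → LpR p v f < ⊤ →
        LpE p v (fun z => HE w f z + HstarE w f z) ≤ ENNReal.ofReal C * LpR p v f) ↔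
      ApE p w v < ⊤) ∧
    ((∃ C > (0:ℝ), ∀ f : ℂ → ℝ, Measurable f → (∀ z, 0 ≤ f z) → LpR p v f < ⊤ →
        LpE p v (SE w f) ≤ ENNReal.ofReal C * LpR p v f) ↔
      ApE p w v < ⊤) ∧
    ((∃ C > (0:ℝ), ∀ f : ℂ → ℝ, Measurable f → LpR p v f < ⊤ →
        LpE p v (MradE w f) ≤ ENNReal.ofReal C * LpR p v f) ↔
      ApE p w v < ⊤) := by
  have hp0 : 0 < p := zero_lt_one.trans hp
  have hSE : ApE p w v < ⊤ → LpBoundedOnNonneg p v (SE w) :=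
    lpBoundedOnNonneg_SE_of_ApE_lt_top hp hw hv
  have hH : LpBoundedOnNonneg p v (SE w) →
      LpBoundedOnNonneg p v fun f z => HE w f z + HstarE w f z := fun hS =>
    hS.of_le_const_mul hp0 (c := 2) fun f z hz =>
      HE_add_HstarE_le_two_mul_SE hw f (mem_ball_zero_iff.1 hz)
  have hM : (LpBoundedOnNonneg p v fun f z => HE w f z + HstarE w f z) →
      LpBounded p v (MradE w) := fun hH =>
    hH.lpBounded_of_le_comp_abs hp0 fun f z _ => MradE_le_HE_add_HstarE_abs hw f z
  have hA : LpBounded p v (MradE w) → ApE p w v < ⊤ := fun ⟨C, hC0, hC⟩ =>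
    (ApE_le_of_forall_LpE_MradE_le hp hw hv hC0 hC).trans_lt ENNReal.ofReal_lt_top
  exact ⟨⟨hA ∘ hM, hH ∘ hSE⟩, ⟨hA ∘ hM ∘ hH, hSE⟩, ⟨hA, hM ∘ hH ∘ hSE⟩⟩

end
end
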